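/- arXiv:0905.0412 — 2 statements merged into one kernel-verified Lean document; each statement's English description precedes it below -/
import Mathlib

section
/- For positive integers n and complex parameters z, w, q (generic), the following transformation holds: ((q w^2; q^2)_n/(w^2;q)_n) · ((q^{-r} w/z;q)_n/(w/z;q)_n) · 4φ3[ w/z, q^r w z, w^2/q, q^{-n} ; w z, q^{-r} w/z, q^n w^2 ; q, -q^{n-r+1} ] = q^{-binom(r,2)} (-q;q)_{n-r} ((q z^2;q^2)_r/(q z^2;q)_r) · 6φ5[ z^2, q z, -q z, q^n w z, q z/w, q^{-r} ; z, -z, w z, q^{1-n} z/w, q^{r+1} z^2 ; q, -q^{r-n} ], for integers 0 ≤ r ≤ n. -/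
open Finset

/-- The q-Pochhammer symbol `(x;q)_k = ∏_{l=0}^{k-1} (1 - x q^l)`. -/
def qPoch {F : Type*} [Field F] (x q : F) (k : ℕ) : F :=
  ∏ l ∈ Finset.range k, (1 - x * q ^ l)

section aux
variable {F : Type*} [Field F]

theorem qPoch_zero' (x q : F) : qPoch x q 0 = 1 := by simp [qPoch]

theorem qPoch_succ' (x q : F) (k : ℕ) :
    qPoch x q (k + 1) = qPoch x q k * (1 - x * q ^ k) := by
  simp [qPoch, Finset.prod_range_succ]

theorem qPoch_shift (x q : F) (k : ℕ) :
    (1 - x) * qPoch (x * q) q k = qPoch x q k * (1 - x * q ^ k) := by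
  induction k with
  | zero => simp [qPoch_zero']
  | succ k ih =>
    rw [qPoch_succ', ← mul_assoc, ih, qPoch_succ']
    ring

theorem qPoch_ne (x q : F) (k : ℕ) (h : ∀ l : ℕ, x * q ^ l ≠ 1) : qPoch x q k ≠ 0 := by
  rw [qPoch, Finset.prod_ne_zero_iff]
  intro l _ h0
  exact h l (by linear_combination -h0)

/-- Telescoping summation with a certificate. -/
theorem telesc (f d ρ : ℕ → F) (h0 : ρ 0 * f 0 = 0)
    (hs : ∀ i, d i * f i + ρ i * f i = ρ (i + 1) * f (i + 1)) (m : ℕ) :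
    ∑ i ∈ Finset.range m, d i * f i = ρ m * f m := by
  induction m with
  | zero => simp [h0]
  | succ m ih => rw [Finset.sum_range_succ, ih, ← hs]; ring

theorem qPoch_neg_zero (q : F) (hq0 : q ≠ 0) (n : ℕ) :
    qPoch (q ^ (-(n : ℤ))) q (n + 1) = 0 := by
  rw [qPoch_succ', zpow_neg, zpow_natCast, inv_mul_cancel₀ (pow_ne_zero _ hq0)]
  simp

/-- Summand of the Kummer sum. -/
def kumT (q a : F) (n i : ℕ) : F :=
  qPoch a q i * qPoch (q ^ (-(n : ℤ))) q i / (qPoch (q ^ n * (a * q)) q i * qPoch q q i) *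
    (-(q ^ (n + 1))) ^ i

theorem kummer (q a : F) (hq0 : q ≠ 0) (hq : ∀ m : ℤ, m ≠ 0 → q ^ m ≠ 1)
    (ha : ∀ m : ℤ, a * q ^ m ≠ 1) (n : ℕ) :
    qPoch (a * q ^ 2) (q ^ 2) n * ∑ i ∈ Finset.range (n + 1), kumT q a n i =
      qPoch (a * q) q n * qPoch (-q) q n := by
  have hqN : ∀ m : ℕ, q ^ (m + 1) ≠ 1 := fun m => by
    have := hq (m + 1 : ℕ) (by omega)
    rwa [zpow_natCast] at this
  have haN : ∀ m : ℕ, a * q ^ m ≠ 1 := fun m => by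
    have := ha m
    rwa [zpow_natCast] at this
  have hqq : ∀ i, qPoch q q i ≠ 0 := fun i => qPoch_ne _ _ _ fun l => by
    rw [← pow_succ']; exact hqN l
  have hD : ∀ n i, qPoch (q ^ n * (a * q)) q i ≠ 0 := fun n i => qPoch_ne _ _ _ fun l => by
    have := haN (n + 1 + l)
    rw [show q ^ n * (a * q) * q ^ l = a * q ^ (n + 1 + l) by ring]; exact this
  induction n with
  | zero => simp [kumT, qPoch_zero']
  | succ n ih =>
    have hQ : q ^ (n + 1) ≠ 0 := pow_ne_zero _ hq0
    have h1 : q ^ (n + 1) - 1 ≠ 0 := sub_ne_zero.2 (hqN n)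
    have h2 : 1 - a * q ^ (n + 1) ≠ 0 := sub_ne_zero.2 (haN _).symm
    -- relate the n-summand to the (n+1)-summand
    have hrel : ∀ i, kumT q a n i * ((q ^ (n + 1) - 1) * (1 - a * q ^ (n + 1)) * q ^ i) =
        kumT q a (n + 1) i * ((q ^ (n + 1) - q ^ i) * (1 - a * q ^ (n + 1) * q ^ i)) := by
      intro i
      have e1 := qPoch_shift (q ^ (-((n + 1 : ℕ) : ℤ))) q i
      have e2 := qPoch_shift (q ^ n * (a * q)) q i
      rw [show q ^ (-((n + 1 : ℕ) : ℤ)) * q = q ^ (-(n : ℤ)) by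
        rw [← zpow_add_one₀ hq0]; congr 1; push_cast; ring] at e1
      have e3 : q ^ (-((n + 1 : ℕ) : ℤ)) = (q ^ (n + 1))⁻¹ := by rw [zpow_neg, zpow_natCast]
      have e1' : (q ^ (n + 1) - 1) * qPoch (q ^ (-(n : ℤ))) q i =
          qPoch (q ^ (-((n + 1 : ℕ) : ℤ))) q i * (q ^ (n + 1) - q ^ i) := by
        have : q ^ (n + 1) * ((1 - q ^ (-((n + 1 : ℕ) : ℤ))) * qPoch (q ^ (-(n : ℤ))) q i) =
          q ^ (n + 1) * (qPoch (q ^ (-((n + 1 : ℕ) : ℤ))) q i *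
            (1 - q ^ (-((n + 1 : ℕ) : ℤ)) * q ^ i)) := by rw [e1]
        have h3 : q ^ (n + 1) * q ^ (-((n + 1 : ℕ) : ℤ)) = 1 := by
          rw [e3]; exact mul_inv_cancel₀ hQ
        linear_combination this + (qPoch (q ^ (-(n : ℤ))) q i -
          qPoch (q ^ (-((n + 1 : ℕ) : ℤ))) q i * q ^ i) * h3
      have e2' : (1 - a * q ^ (n + 1)) * qPoch (q ^ (n + 1) * (a * q)) q i =
          qPoch (q ^ n * (a * q)) q i * (1 - a * q ^ (n + 1) * q ^ i) := by
        rw [show q ^ (n + 1) * (a * q) = q ^ n * (a * q) * q by ring]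
        linear_combination e2
      have d1 := hD n i
      have d2 := hD (n + 1) i
      have d3 := hqq i
      unfold kumT
      generalize qPoch (q ^ (-((n + 1 : ℕ) : ℤ))) q i = p1 at *
      generalize qPoch (q ^ (-(n : ℤ))) q i = p2 at *
      generalize qPoch (q ^ (n + 1) * (a * q)) q i = p3 at *
      generalize qPoch (q ^ n * (a * q)) q i = p4 at *
      have e4 : (-(q ^ (n + 1 + 1))) ^ i = (-(q ^ (n + 1))) ^ i * q ^ i := by
        rw [← mul_pow]; congr 1; ring
      rw [e4]
      generalize (-(q ^ (n + 1))) ^ i = y at *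
      field_simp
      linear_combination (qPoch a q i * y) * (
        (1 - a * q ^ (n + 1)) * p3 * e1' + p1 * (q ^ (n + 1) - q ^ i) * e2')
    have htel := telesc (fun i => kumT q a (n + 1) i)
      (fun i => (1 - a * q ^ (2 * n + 2)) - (1 + q ^ (n + 1)) * (q ^ (n + 1) - q ^ i) *
        (1 - a * q ^ (n + 1) * q ^ i) / ((q ^ (n + 1) - 1) * q ^ i))
      (fun i => q ^ (n + 1) / ((q ^ (n + 1) - 1) * q ^ i) * (1 - q ^ i) *
        (1 - a * q ^ (n + 1) * q ^ i)) (by simp) (by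
        intro i
        have hX : q ^ i ≠ 0 := pow_ne_zero _ hq0
        have d1 := hD (n + 1) i
        have d2 := hqq i
        have d3 : 1 - q ^ (n + 1) * (a * q) * q ^ i ≠ 0 := sub_ne_zero.2 (by
          have := haN (n + 1 + 1 + i)
          rw [show q ^ (n + 1) * (a * q) * q ^ i = a * q ^ (n + 1 + 1 + i) by ring]
          exact this.symm)
        have d4 : 1 - q * q ^ i ≠ 0 := sub_ne_zero.2 (by
          rw [← pow_succ']; exact (hqN i).symm)
        unfold kumT
        rw [qPoch_succ', qPoch_succ', qPoch_succ', qPoch_succ', zpow_neg, zpow_natCast,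
          pow_succ' q i, pow_succ _ i]
        rw [show q ^ (2 * n + 2) = (q ^ (n + 1)) ^ 2 by ring,
          show q ^ (n + 1 + 1) = q * q ^ (n + 1) by ring]
        generalize q ^ (n + 1) = Q at *
        generalize q ^ i = X at *
        generalize qPoch (Q * (a * q)) q i = p1 at *
        generalize qPoch Q⁻¹ q i = p2 at *
        generalize qPoch a q i = p3 at *
        generalize qPoch q q i = p4 at *
        generalize (-(q * Q)) ^ i = y at *
        clear hrel ih hqq hD
        generalize hE : 1 - Q * (a * q) * X = E at *
        generalize hE' : 1 - q * X = E' at *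
        field_simp
        subst hE hE'
        ring) (n + 2)
    have hz : kumT q a (n + 1) (n + 2) = 0 := by
      unfold kumT
      rw [qPoch_neg_zero q hq0 (n + 1)]; simp
    rw [hz, mul_zero] at htel
    have hz' : kumT q a n (n + 1) = 0 := by
      unfold kumT
      rw [qPoch_neg_zero q hq0 n]; simp
    have hsum : (1 - a * q ^ (2 * n + 2)) * ∑ i ∈ Finset.range (n + 2), kumT q a (n + 1) i =
        (1 + q ^ (n + 1)) * (1 - a * q ^ (n + 1)) * ∑ i ∈ Finset.range (n + 1), kumT q a n i := by
      have e : ∑ i ∈ Finset.range (n + 1), kumT q a n i =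
        ∑ i ∈ Finset.range (n + 2), kumT q a n i := by
        rw [Finset.sum_range_succ _ (n + 1), hz', add_zero]
      rw [e, Finset.mul_sum, Finset.mul_sum, ← sub_eq_zero, ← Finset.sum_sub_distrib, ← htel]
      refine Finset.sum_congr rfl fun i _ => ?_
      have hX : q ^ i ≠ 0 := pow_ne_zero _ hq0
      have := hrel i
      field_simp
      linear_combination (-(1 + q ^ (n + 1))) * this
    rw [qPoch_succ', qPoch_succ', qPoch_succ']
    rw [show (q ^ 2) ^ n = q ^ (2 * n) by rw [pow_mul]]
    linear_combination (qPoch (a * q ^ 2) (q ^ 2) n) * hsum +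
      (1 + q ^ (n + 1)) * (1 - a * q ^ (n + 1)) * ih

end aux

section aux2
variable {F : Type*} [Field F]

/-- Generic summand of a `4φ3`. -/
def phi4 (q a b c d e f g ζ : F) (i : ℕ) : F :=
  (qPoch a q i * qPoch b q i * qPoch c q i * qPoch d q i) /
    (qPoch e q i * qPoch f q i * qPoch g q i) * ζ ^ i / qPoch q q i

theorem lrec (q u V N : F) (n r d : ℕ) (hn : n = r + 1 + d) (hq0 : q ≠ 0)
    (hq : ∀ m : ℕ, q * q ^ m ≠ 1)
    (hu : ∀ m : ℕ, u * q ^ m ≠ 1) (hV : ∀ m : ℕ, V * q ^ m ≠ 1)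
    (hw : ∀ m : ℕ, u * V * q * q ^ r * q ^ n * q ^ m ≠ 1)
    (hN : N * q ^ n = 1) :
    q ^ r * (1 + q * q ^ d) * (V - u) * (qPoch V q n * qPoch u q n *
      ∑ i ∈ Finset.range (n + 1), phi4 q (V * q * q ^ r) (q ^ r * u * q) (u * V * q ^ r) N
        u V (u * V * q * q ^ r * q ^ n) (-(q * q ^ d)) i) =
    (V - u * q ^ r) * (qPoch (V * q) q n * qPoch u q n *
      ∑ i ∈ Finset.range (n + 1), phi4 q (V * q * q ^ r) (q ^ r * u) (u * V * q ^ r) N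
        u (V * q) (u * V * q * q ^ r * q ^ n) (-(q * q * q ^ d)) i) +
    (V * q ^ r - u) * (qPoch V q n * qPoch (u * q) q n *
      ∑ i ∈ Finset.range (n + 1), phi4 q (V * q ^ r) (q ^ r * u * q) (u * V * q ^ r) N
        (u * q) V (u * V * q * q ^ r * q ^ n) (-(q * q * q ^ d)) i) := by
  have nz : ∀ {x : F}, x ≠ 1 → 1 - x ≠ 0 := fun h => sub_ne_zero.2 h.symm
  have pqq : ∀ i, qPoch q q i ≠ 0 := fun i => qPoch_ne _ _ _ hq
  have pu : ∀ i, qPoch u q i ≠ 0 := fun i => qPoch_ne _ _ _ hu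
  have puq : ∀ i, qPoch (u * q) q i ≠ 0 := fun i => qPoch_ne _ _ _ fun l => by
    have := hu (l + 1); rwa [pow_succ', ← mul_assoc] at this
  have pV : ∀ i, qPoch V q i ≠ 0 := fun i => qPoch_ne _ _ _ hV
  have pVq : ∀ i, qPoch (V * q) q i ≠ 0 := fun i => qPoch_ne _ _ _ fun l => by
    have := hV (l + 1); rwa [pow_succ', ← mul_assoc] at this
  have pW : ∀ i, qPoch (u * V * q * q ^ r * q ^ n) q i ≠ 0 := fun i => qPoch_ne _ _ _ hw
  have n1 : 1 - u ≠ 0 := nz (by simpa using hu 0)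
  have n2 : 1 - V ≠ 0 := nz (by simpa using hV 0)
  have n3 : 1 - q ^ r * u ≠ 0 := nz (by simpa [mul_comm] using hu r)
  have n4 : 1 - V * q ^ n ≠ 0 := nz (hV n)
  have n5 : ∀ i, 1 - u * q ^ i ≠ 0 := fun i => nz (hu i)
  have n6 : ∀ i, 1 - V * q ^ r * q ^ i ≠ 0 := fun i => nz (by
    have := hV (r + i); rwa [pow_add, ← mul_assoc] at this)
  have n7 : ∀ i, 1 - V * q * q ^ i ≠ 0 := fun i => nz (by
    have := hV (i + 1); rwa [pow_succ', ← mul_assoc] at this)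
  have n8 : ∀ i, 1 - u * V * q * q ^ r * q ^ n * q ^ i ≠ 0 := fun i => nz (hw i)
  have n9 : ∀ i, 1 - q * q ^ i ≠ 0 := fun i => nz (hq i)
  have n10 : ∀ i, q ^ i ≠ 0 := fun i => pow_ne_zero _ hq0
  set T0 := phi4 q (V * q * q ^ r) (q ^ r * u) (u * V * q ^ r) N
        u (V * q) (u * V * q * q ^ r * q ^ n) (-(q * q * q ^ d)) with hT0
  set T1 := phi4 q (V * q * q ^ r) (q ^ r * u * q) (u * V * q ^ r) N
        u V (u * V * q * q ^ r * q ^ n) (-(q * q ^ d)) with hT1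
  set T2 := phi4 q (V * q ^ r) (q ^ r * u * q) (u * V * q ^ r) N
        (u * q) V (u * V * q * q ^ r * q ^ n) (-(q * q * q ^ d)) with hT2
  have r1 : ∀ i, T1 i = T0 i * ((1 - q ^ r * u * q ^ i) * (1 - V * q ^ i) /
      ((1 - q ^ r * u) * (1 - V) * q ^ i)) := by
    intro i
    have e1 := qPoch_shift (q ^ r * u) q i
    have e2 := qPoch_shift V q i
    have e3 : (-(q * q * q ^ d)) ^ i = (-(q * q ^ d)) ^ i * q ^ i := by
      rw [← mul_pow]; congr 1; ring
    rw [hT0, hT1]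
    unfold phi4
    rw [e3, eq_div_of_mul_eq n3 ((mul_comm _ _).trans e1)]
    rw [eq_div_of_mul_eq n2 ((mul_comm _ _).trans e2)]
    have := pV i
    have := pu i
    have := pW i
    have := pqq i
    have := n10 i
    have h5 : 1 - V * q ^ i ≠ 0 := nz (hV i)
    generalize qPoch (u * V * q * q ^ r * q ^ n) q i = a1 at *
    generalize qPoch (V * q * q ^ r) q i = a2 at *
    generalize qPoch (q ^ r * u) q i = a3 at *
    generalize qPoch (u * V * q ^ r) q i = a4 at *
    generalize (-(q * q ^ d)) ^ i = a5 at *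
    generalize 1 - q ^ r * u * q ^ i = a6 at *
    generalize 1 - q ^ r * u = a7 at *
    field_simp
  have r2 : ∀ i, T2 i = T0 i * ((1 - V * q ^ r) * (1 - q ^ r * u * q ^ i) * (1 - u) *
      (1 - V * q ^ i) / ((1 - V * q ^ r * q ^ i) * (1 - q ^ r * u) * (1 - u * q ^ i) *
        (1 - V))) := by
    intro i
    have e1 := qPoch_shift (q ^ r * u) q i
    have e2 := qPoch_shift V q i
    have e4 := qPoch_shift u q i
    have e5 := qPoch_shift (V * q ^ r) q i
    rw [hT0, hT2]
    unfold phi4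
    rw [eq_div_of_mul_eq n3 ((mul_comm _ _).trans e1)]
    rw [eq_div_of_mul_eq n2 ((mul_comm _ _).trans e2)]
    rw [eq_div_of_mul_eq n1 ((mul_comm _ _).trans e4)]
    rw [show V * q * q ^ r = V * q ^ r * q by ring]
    rw [eq_div_of_mul_eq (n6 i) e5.symm]
    have := pV i
    have := pu i
    have := pW i
    have := pqq i
    have := n10 i
    have h5 : 1 - V * q ^ i ≠ 0 := nz (hV i)
    have h6 := n6 i
    have h7 := n5 i
    generalize qPoch (u * V * q * q ^ r * q ^ n) q i = a1 at *
    generalize qPoch (V * q ^ r * q) q i = a2 at *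
    generalize qPoch (q ^ r * u) q i = a3 at *
    generalize qPoch (u * V * q ^ r) q i = a4 at *
    generalize (-(q * q * q ^ d)) ^ i = a5 at *
    generalize 1 - q ^ r * u * q ^ i = a6 at *
    generalize 1 - q ^ r * u = a7 at *
    generalize 1 - V * q ^ r * q ^ i = a8 at *
    generalize 1 - u * q ^ i = a9 at *
    field_simp
  have k1 : qPoch V q n = (1 - V) * qPoch (V * q) q n / (1 - V * q ^ n) := by
    rw [eq_div_iff n4, qPoch_shift]
  have k2 : qPoch (u * q) q n = qPoch u q n * (1 - u * q ^ n) / (1 - u) := by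
    rw [eq_div_iff n1, mul_comm, qPoch_shift]
  have htel := telesc T0
    (fun i => q ^ r * (1 + q * q ^ d) * (V - u) * (1 - q ^ r * u * q ^ i) * (1 - V * q ^ i) /
        ((1 - q ^ r * u) * q ^ i * (1 - V * q ^ n)) - (V - u * q ^ r) -
        (V * q ^ r - u) * (1 - V * q ^ r) * (1 - q ^ r * u * q ^ i) * (1 - V * q ^ i) *
          (1 - u * q ^ n) /
          ((1 - V * q ^ r * q ^ i) * (1 - q ^ r * u) * (1 - u * q ^ i) * (1 - V * q ^ n)))
    (fun i => -(q ^ r * (V - u)) * (1 - q ^ i) * (1 - u * V * q ^ r * q ^ n * q ^ i) *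
        (1 - V * q ^ i) / (q ^ i * (1 - q ^ r * u) * (1 - V * q ^ r * q ^ i) * (1 - V * q ^ n)))
    (by simp) (by
      intro i
      have step : T0 (i + 1) = T0 i * ((1 - V * q * q ^ r * q ^ i) * (1 - q ^ r * u * q ^ i) *
          (1 - u * V * q ^ r * q ^ i) * (1 - N * q ^ i) * (-(q * q * q ^ d)) /
          ((1 - u * q ^ i) * (1 - V * q * q ^ i) * (1 - u * V * q * q ^ r * q ^ n * q ^ i) *
          (1 - q * q ^ i))) := by
        rw [hT0]
        unfold phi4
        simp only [qPoch_succ', pow_succ _ i]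
        simp only [div_eq_mul_inv, mul_inv]
        ring
      rw [step]
      have m1 := n10 i
      have m2 := n5 i
      have m3 := n6 i
      have m4 := n7 i
      have m5 := n8 i
      have m6 := n9 i
      have m7 := n6 (i + 1)
      have hQ : q ^ n = q * q ^ r * q ^ d := by rw [hn]; ring
      have hNe : N = (q ^ n)⁻¹ := eq_inv_of_mul_eq_one_left hN
      have m8 := n10 r
      have m9 := n10 d
      rw [hNe]
      simp only [pow_succ' q i] at m7 ⊢
      rw [hQ] at m5 n4 ⊢
      generalize T0 i = t at *
      generalize q ^ r = R at *
      generalize q ^ d = D at *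
      generalize q ^ i = X at *
      clear hT0 hT1 hT2 r1 r2 k1 k2 step n5 n6 n7 n8 n9 n10 pqq pu puq pV pVq pW hNe hQ
      generalize h1 : 1 - u * X = E1 at *
      generalize h2 : 1 - V * R * X = E2 at *
      generalize h3 : 1 - V * q * X = E3 at *
      generalize h4 : 1 - u * V * q * R * (q * R * D) * X = E4 at *
      generalize h5 : 1 - q * X = E5 at *
      generalize h6 : 1 - V * R * (q * X) = E6 at *
      generalize h7 : 1 - R * u = E7 at *
      generalize h8 : 1 - V * (q * R * D) = E8 at *
      have h6' : 1 - V * q * R * X = E6 := by rw [← h6]; ring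
      have h3' : 1 - V * (q * X) = E3 := by rw [← h3]; ring
      have h4' : 1 - u * V * R * (q * R * D) * (q * X) = E4 := by rw [← h4]; ring
      rw [h6', h3', h4']
      field_simp
      subst h1 h2 h7 h8
      ring) (n + 1)
  have hz : T0 (n + 1) = 0 := by
    have : qPoch N q (n + 1) = 0 := by rw [qPoch_succ', hN]; simp
    rw [hT0]; unfold phi4; rw [this]; simp
  rw [hz, mul_zero] at htel
  rw [k1, k2]
  have e1 : ∑ i ∈ Finset.range (n + 1), T1 i = ∑ i ∈ Finset.range (n + 1), T0 i *
      ((1 - q ^ r * u * q ^ i) * (1 - V * q ^ i) / ((1 - q ^ r * u) * (1 - V) * q ^ i)) :=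
    Finset.sum_congr rfl fun i _ => r1 i
  have e2 := Finset.sum_congr (rfl : Finset.range (n + 1) = _) fun i _ => r2 i
  rw [e1, e2, ← sub_eq_zero]
  rw [← mul_zero (qPoch (V * q) q n * qPoch u q n), ← htel]
  simp only [Finset.mul_sum]
  rw [← Finset.sum_add_distrib, ← Finset.sum_sub_distrib]
  refine Finset.sum_congr rfl fun i _ => ?_
  have m1 := n10 i
  have m2 := n5 i
  have m3 := n6 i
  generalize 1 - u * q ^ i = E1 at *
  generalize 1 - V * q ^ r * q ^ i = E2 at *
  generalize 1 - q ^ r * u = E3 at *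
  generalize 1 - V * q ^ n = E4 at *
  generalize 1 - q ^ r * u * q ^ i = E5 at *
  field_simp
  ring

/-- The coefficients `q^(i choose 2) * [r choose i]_q`. -/
def bco (q : F) (r i : ℕ) : F := (∏ l ∈ Finset.range i, (q ^ l - q ^ r)) / qPoch q q i

theorem bco_zero (q : F) (r : ℕ) : bco q r 0 = 1 := by simp [bco, qPoch]

theorem bco_self (q : F) (r : ℕ) : bco q r (r + 1) = 0 := by
  simp [bco, Finset.prod_range_succ]

theorem bco_rec (q y : F) (r i : ℕ) (hq : ∀ m : ℕ, q * q ^ m ≠ 1) :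
    bco q (r + 1) (i + 1) * (1 - y * q ^ (r + 1)) =
      bco q r (i + 1) * (1 - y * q ^ (i + 1) * q ^ (r + 1)) +
        q ^ r * bco q r i * (1 - y * q ^ (i + 1)) := by
  have h1 : qPoch q q i ≠ 0 := qPoch_ne _ _ _ hq
  have h2 : 1 - q * q ^ i ≠ 0 := sub_ne_zero.2 (hq i).symm
  have h3 : ∏ l ∈ Finset.range (i + 1), (q ^ l - q ^ (r + 1)) =
      (1 - q ^ (r + 1)) * (q ^ i * ∏ l ∈ Finset.range i, (q ^ l - q ^ r)) := by
    rw [Finset.prod_range_succ', pow_zero, mul_comm]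
    congr 1
    rw [show q ^ i = ∏ l ∈ Finset.range i, q by simp, ← Finset.prod_mul_distrib]
    exact Finset.prod_congr rfl fun l _ => by ring
  unfold bco
  rw [h3, Finset.prod_range_succ, qPoch_succ']
  generalize ∏ l ∈ Finset.range i, (q ^ l - q ^ r) = P at *
  generalize hE : 1 - q * q ^ i = E at *
  field_simp
  subst hE
  ring

def Sg (q y : F) (g : ℕ → F) (r : ℕ) : F :=
  ∑ i ∈ Finset.range (r + 1), bco q r i * (1 - y * q ^ (2 * i)) / qPoch (y * q ^ i) q (r + 1) * g i

theorem Sg_rec (q y : F) (g : ℕ → F) (r : ℕ) (hq : ∀ m : ℕ, q * q ^ m ≠ 1)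
    (hy : ∀ m : ℕ, y * q ^ m ≠ 1) :
    (1 - y * q ^ (r + 1)) * Sg q y g (r + 1) =
      Sg q y g r + q ^ r * Sg q (y * q ^ 2) (fun i => g (i + 1)) r := by
  have nz : ∀ {x : F}, x ≠ 1 → 1 - x ≠ 0 := fun h => sub_ne_zero.2 h.symm
  have e1 : Sg q y g r = ∑ i ∈ Finset.range (r + 2),
      bco q r i * (1 - y * q ^ (2 * i)) / qPoch (y * q ^ i) q (r + 1) * g i := by
    rw [Finset.sum_range_succ _ (r + 1), bco_self]; simp [Sg]
  rw [e1]
  unfold Sg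
  rw [Finset.sum_range_succ' _ (r + 1), Finset.sum_range_succ' _ (r + 1), mul_add]
  have hadd : ∀ a b c d e : F, a = c + e → b = d → a + b = c + d + e := by
    intro a b c d e h1 h2; rw [h1, h2]; ring
  have pz : ∀ i k, qPoch (y * q ^ i) q k ≠ 0 := fun i k => qPoch_ne _ _ _ fun l => by
    have := hy (i + l); rwa [pow_add, ← mul_assoc] at this
  apply hadd
  · rw [Finset.mul_sum, Finset.mul_sum, ← Finset.sum_add_distrib]
    refine Finset.sum_congr rfl fun i _ => ?_
    have h := bco_rec q y r i hq
    have a1 := qPoch_succ' (y * q ^ (i + 1)) q (r + 1)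
    have a2 := qPoch_shift (y * q ^ (i + 1)) q (r + 1)
    have z1 := pz (i + 1) (r + 1)
    have z2 := pz (i + 2) (r + 1)
    have z3 : 1 - y * q ^ (i + 1) ≠ 0 := nz (hy _)
    have z4 : 1 - y * q ^ (i + 1) * q ^ (r + 1) ≠ 0 := nz (by
      have := hy (i + 1 + (r + 1)); rwa [pow_add, ← mul_assoc] at this)
    rw [show y * q ^ (i + 1) * q = y * q ^ (i + 2) by ring] at a2
    rw [show y * q ^ 2 * q ^ i = y * q ^ (i + 2) by ring,
      show y * q ^ 2 * q ^ (2 * i) = y * q ^ (2 * (i + 1)) by ring, a1]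
    rw [eq_div_of_mul_eq z3 ((mul_comm _ _).trans a2)]
    generalize 1 - y * q ^ (i + 1) * q ^ (r + 1) = E1 at *
    generalize 1 - y * q ^ (i + 1) = E2 at *
    generalize 1 - y * q ^ (r + 1) = E3 at *
    generalize 1 - y * q ^ (2 * (i + 1)) = E4 at *
    field_simp
    linear_combination (E4 * g (i + 1)) * h
  · have a1 := qPoch_succ' (y * q ^ 0) q (r + 1)
    have z1 := pz 0 (r + 1)
    have z4 : 1 - y * q ^ 0 * q ^ (r + 1) ≠ 0 := nz (by
      have := hy (r + 1); simpa using this)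
    rw [a1, bco_zero, bco_zero]
    simp only [pow_zero, mul_one, mul_zero] at *
    field_simp
end aux2

section aux3
variable {F : Type*} [Field F]

/-- The function `x ↦ (w x; q)_n (w / x; q)_n` at `x = z q^i`. -/
def gfun (q w z : F) (n i : ℕ) : F := qPoch (w * z * q ^ i) q n * qPoch (w / z * (q ^ i)⁻¹) q n

/-- Normalised left hand side. -/
def Afun (q w z : F) (n r : ℕ) : F :=
  qPoch (q ^ (-(r : ℤ)) * w / z) q n * qPoch (w * z) q n *
    ∑ i ∈ Finset.range (n + 1), phi4 q (w / z) (q ^ r * w * z) (w ^ 2 / q) (q ^ (-(n : ℤ)))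
      (w * z) (q ^ (-(r : ℤ)) * w / z) (q ^ n * w ^ 2) (-(q ^ (n - r + 1))) i

theorem Afun_zero (q w z : F) (n : ℕ)
    (hq0 : q ≠ 0) (hq : ∀ m : ℤ, m ≠ 0 → q ^ m ≠ 1)
    (hw2 : ∀ m : ℤ, w ^ 2 * q ^ m ≠ 1)
    (hwz : ∀ m : ℤ, w * z * q ^ m ≠ 1 ∧ w * z⁻¹ * q ^ m ≠ 1) :
    qPoch (q * w ^ 2) (q ^ 2) n * Afun q w z n 0 =
      qPoch (w ^ 2) q n * qPoch (-q) q n * (qPoch (w / z) q n * qPoch (w * z) q n) := by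
  have k := kummer q (w ^ 2 / q) hq0 hq (fun m => by
    have := hw2 (m - 1)
    rwa [zpow_sub_one₀ hq0, mul_comm (q ^ m), ← mul_assoc, ← div_eq_mul_inv] at this) n
  rw [show w ^ 2 / q * q ^ 2 = q * w ^ 2 by field_simp,
    show w ^ 2 / q * q = w ^ 2 by field_simp] at k
  have pu : ∀ i, qPoch (w * z) q i ≠ 0 := fun i => qPoch_ne _ _ _ fun l => by
    have := (hwz l).1; rwa [zpow_natCast] at this
  have pv : ∀ i, qPoch (w / z) q i ≠ 0 := fun i => qPoch_ne _ _ _ fun l => by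
    have := (hwz l).2; rwa [zpow_natCast, ← div_eq_mul_inv] at this
  have e : ∀ i, phi4 q (w / z) (q ^ 0 * w * z) (w ^ 2 / q) (q ^ (-(n : ℤ)))
      (w * z) (q ^ (-((0 : ℕ) : ℤ)) * w / z) (q ^ n * w ^ 2) (-(q ^ (n - 0 + 1))) i =
      kumT q (w ^ 2 / q) n i := by
    intro i
    have h1 := pu i
    have h2 := pv i
    unfold phi4 kumT
    rw [show w ^ 2 / q * q = w ^ 2 by field_simp]
    simp only [Nat.cast_zero, neg_zero, zpow_zero, one_mul, pow_zero, Nat.sub_zero]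
    generalize qPoch (w * z) q i = a1 at *
    generalize qPoch (w / z) q i = a2 at *
    generalize qPoch (w ^ 2 / q) q i = a3 at *
    generalize qPoch (q ^ n * w ^ 2) q i = a4 at *
    generalize qPoch (q ^ (-(n : ℤ))) q i = a5 at *
    generalize (-(q ^ (n + 1))) ^ i = a6 at *
    by_cases h3 : a4 = 0
    · simp [h3]
    by_cases h4 : qPoch q q i = 0
    · simp [h4]
    field_simp
  unfold Afun
  rw [Finset.sum_congr rfl fun i _ => e i]
  simp only [Nat.cast_zero, neg_zero, zpow_zero, one_mul]
  linear_combination (qPoch (w / z) q n * qPoch (w * z) q n) * k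

theorem Afun_rec (q w z : F) (n r d : ℕ) (hn : n = r + 1 + d)
    (hq0 : q ≠ 0) (hw0 : w ≠ 0) (hz0 : z ≠ 0)
    (hq : ∀ m : ℤ, m ≠ 0 → q ^ m ≠ 1)
    (hw2 : ∀ m : ℤ, w ^ 2 * q ^ m ≠ 1)
    (hwz : ∀ m : ℤ, w * z * q ^ m ≠ 1 ∧ w * z⁻¹ * q ^ m ≠ 1) :
    q ^ r * (1 + q * q ^ d) * (1 - z ^ 2 * q ^ (r + 1)) * Afun q w z n (r + 1) =
      (1 - q * z ^ 2 * (q ^ 2) ^ r) * Afun q w z n r +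
        q ^ r * (1 - q * z ^ 2) * Afun q w (z * q) n r := by
  have hR : q ^ r ≠ 0 := pow_ne_zero _ hq0
  have h := lrec q (w * z) (w / z * (q ^ (r + 1))⁻¹) (q ^ (-(n : ℤ))) n r d hn hq0
    (fun m => by
      have := hq (m + 1 : ℕ) (by omega)
      rwa [zpow_natCast, pow_succ'] at this)
    (fun m => by
      have := (hwz m).1
      rwa [zpow_natCast] at this)
    (fun m => by
      have := (hwz ((m : ℤ) - (r + 1 : ℕ))).2
      rw [zpow_sub₀ hq0, zpow_natCast, zpow_natCast] at this
      intro h; apply this; rw [← h]; field_simp)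
    (fun m => by
      have := hw2 ((n + m : ℕ))
      rw [zpow_natCast] at this
      intro h; apply this; rw [← h]; field_simp; ring)
    (by rw [zpow_neg, zpow_natCast]; exact inv_mul_cancel₀ (pow_ne_zero _ hq0))
  have hs1 : n - r + 1 = d + 2 := by omega
  have hs2 : n - (r + 1) + 1 = d + 1 := by omega
  rw [show w / z * (q ^ (r + 1))⁻¹ * q * q ^ r = w / z by field_simp; ring,
    show w * z * (w / z * (q ^ (r + 1))⁻¹) * q ^ r = w ^ 2 / q by field_simp; ring,
    show w * z * (w / z * (q ^ (r + 1))⁻¹) * q * q ^ r * q ^ n = q ^ n * w ^ 2 by field_simp; ring]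
    at h
  have a0 : Afun q w z n r = qPoch (w / z * (q ^ (r + 1))⁻¹ * q) q n * qPoch (w * z) q n *
      ∑ i ∈ Finset.range (n + 1), phi4 q (w / z) (q ^ r * (w * z)) (w ^ 2 / q)
        (q ^ (-(n : ℤ))) (w * z) (w / z * (q ^ (r + 1))⁻¹ * q) (q ^ n * w ^ 2)
        (-(q * q * q ^ d)) i := by
    unfold Afun
    rw [hs1, show q ^ (-(r : ℤ)) * w / z = w / z * (q ^ (r + 1))⁻¹ * q by
        rw [zpow_neg, zpow_natCast]; field_simp; ring,
      show q ^ r * w * z = q ^ r * (w * z) by ring,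
      show q ^ (d + 2) = q * q * q ^ d by ring]
  have a1 : Afun q w z n (r + 1) = qPoch (w / z * (q ^ (r + 1))⁻¹) q n * qPoch (w * z) q n *
      ∑ i ∈ Finset.range (n + 1), phi4 q (w / z) (q ^ r * (w * z) * q) (w ^ 2 / q)
        (q ^ (-(n : ℤ))) (w * z) (w / z * (q ^ (r + 1))⁻¹) (q ^ n * w ^ 2)
        (-(q * q ^ d)) i := by
    unfold Afun
    rw [hs2, show q ^ (-((r + 1 : ℕ) : ℤ)) * w / z = w / z * (q ^ (r + 1))⁻¹ by
        rw [zpow_neg, zpow_natCast]; field_simp,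
      show q ^ (r + 1) * w * z = q ^ r * (w * z) * q by ring,
      show q ^ (d + 1) = q * q ^ d by ring]
  have a2 : Afun q w (z * q) n r =
      qPoch (w / z * (q ^ (r + 1))⁻¹) q n * qPoch (w * z * q) q n *
      ∑ i ∈ Finset.range (n + 1), phi4 q (w / z * (q ^ (r + 1))⁻¹ * q ^ r)
        (q ^ r * (w * z) * q) (w ^ 2 / q)
        (q ^ (-(n : ℤ))) (w * z * q) (w / z * (q ^ (r + 1))⁻¹) (q ^ n * w ^ 2)
        (-(q * q * q ^ d)) i := by
    unfold Afun
    rw [hs1, show q ^ (-(r : ℤ)) * w / (z * q) = w / z * (q ^ (r + 1))⁻¹ by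
        rw [zpow_neg, zpow_natCast]; field_simp; ring,
      show w / (z * q) = w / z * (q ^ (r + 1))⁻¹ * q ^ r by field_simp; ring,
      show q ^ r * w * (z * q) = q ^ r * (w * z) * q by ring,
      show w * (z * q) = w * z * q by ring,
      show q ^ (d + 2) = q * q * q ^ d by ring]
  rw [← a0, ← a1, ← a2] at h
  clear a0 a1 a2
  have hc : w / z * (q ^ (r + 1))⁻¹ ≠ 0 := 
    mul_ne_zero (div_ne_zero hw0 hz0) (inv_ne_zero (pow_ne_zero _ hq0))
  apply mul_left_cancel₀ hc
  have v1 : w / z * (q ^ (r + 1))⁻¹ * (1 - z ^ 2 * q ^ (r + 1)) =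
    w / z * (q ^ (r + 1))⁻¹ - w * z := by field_simp
  have v2 : w / z * (q ^ (r + 1))⁻¹ * (1 - q * z ^ 2 * (q ^ 2) ^ r) =
    w / z * (q ^ (r + 1))⁻¹ - w * z * q ^ r := by field_simp; ring
  have v3 : w / z * (q ^ (r + 1))⁻¹ * (q ^ r * (1 - q * z ^ 2)) =
    w / z * (q ^ (r + 1))⁻¹ * q ^ r - w * z := by field_simp; ring
  linear_combination h + q ^ r * (1 + q * q ^ d) * Afun q w z n (r + 1) * v1 -
    Afun q w z n r * v2 - Afun q w (z * q) n r * v3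

theorem main_ind (q w : F) (n : ℕ)
    (hq0 : q ≠ 0) (hw0 : w ≠ 0)
    (hq : ∀ m : ℤ, m ≠ 0 → q ^ m ≠ 1)
    (hw2 : ∀ m : ℤ, w ^ 2 * q ^ m ≠ 1) (r : ℕ) :
    ∀ (z : F) (_ : r ≤ n) (_ : z ≠ 0)
    (_ : ∀ m : ℤ, w * z * q ^ m ≠ 1 ∧ w * z⁻¹ * q ^ m ≠ 1)
    (_ : ∀ m : ℤ, z ^ 2 * q ^ m ≠ 1),
    qPoch (q * w ^ 2) (q ^ 2) n * Afun q w z n r =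
      qPoch (w ^ 2) q n * (q ^ (-(r.choose 2 : ℤ)) * qPoch (-q) q (n - r) *
        qPoch (q * z ^ 2) (q ^ 2) r * Sg q (z ^ 2) (gfun q w z n) r) := by
  induction r with
  | zero =>
    intro z hr hz0 hwz hz2
    rw [Afun_zero q w z n hq0 hq hw2 hwz]
    have h1 : 1 - z ^ 2 ≠ 0 := sub_ne_zero.2 (by simpa using (hz2 0).symm)
    have : Sg q (z ^ 2) (gfun q w z n) 0 = qPoch (w / z) q n * qPoch (w * z) q n := by
      simp [Sg, bco, qPoch_zero', qPoch_succ', gfun, h1, mul_comm]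
    rw [this]
    simp [qPoch_zero']
    ring
  | succ r ih =>
    intro z hr hz0 hwz hz2
    obtain ⟨d, hd⟩ : ∃ d, n = r + 1 + d := ⟨n - (r + 1), by omega⟩
    have i0 := ih z (by omega) hz0 hwz hz2
    have i2 := ih (z * q) (by omega) (mul_ne_zero hz0 hq0)
      (fun m => by
        have h1 := (hwz (m + 1)).1
        have h2 := (hwz (m - 1)).2
        rw [zpow_add_one₀ hq0] at h1
        rw [zpow_sub_one₀ hq0] at h2
        constructor
        · intro h; apply h1; rw [← h]; ring
        · intro h; apply h2; rw [← h, mul_inv]; ring)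
      (fun m => by
        have h1 := hz2 (m + 2)
        rw [zpow_add₀ hq0] at h1
        intro h; apply h1; rw [← h]; rw [zpow_ofNat]; ring)
    have hA := Afun_rec q w z n r d hd hq0 hw0 hz0 hq hw2 hwz
    have hS := Sg_rec q (z ^ 2) (gfun q w z n) r (fun m => by
        have := hq (m + 1 : ℕ) (by omega)
        rwa [zpow_natCast, pow_succ'] at this) (fun m => by
        have := hz2 m
        rwa [zpow_natCast] at this)
    have hg : (fun i => gfun q w z n (i + 1)) = gfun q w (z * q) n := by
      funext i
      unfold gfun
      rw [show w * z * q ^ (i + 1) = w * (z * q) * q ^ i by ring,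
        show w / z * (q ^ (i + 1))⁻¹ = w / (z * q) * (q ^ i)⁻¹ by field_simp; ring]
    rw [hg, ← mul_pow] at hS
    have hZ := qPoch_shift (q * z ^ 2) (q ^ 2) r
    rw [show q * z ^ 2 * q ^ 2 = q * (z * q) ^ 2 by ring] at hZ
    rw [show n - r = d + 1 by omega, qPoch_succ'] at i0 i2
    rw [show n - (r + 1) = d by omega, qPoch_succ']
    have hκ : q ^ (-((r + 1).choose 2 : ℤ)) * q ^ r = q ^ (-(r.choose 2 : ℤ)) := by
      rw [← zpow_natCast, ← zpow_add₀ hq0]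
      congr 1
      rw [Nat.choose_succ_succ' r 1]
      push_cast [Nat.choose_one_right]
      ring
    rw [← hκ] at i0 i2
    have c1 : 1 + q * q ^ d ≠ 0 := by
      intro h
      have := hq ((2 * (d + 1) : ℕ)) (by omega)
      rw [zpow_natCast] at this
      apply this
      rw [show q ^ (2 * (d + 1)) = (q * q ^ d) ^ 2 by ring]
      rw [show q * q ^ d = -1 by linear_combination h]
      ring
    have c2 : 1 - z ^ 2 * q ^ (r + 1) ≠ 0 := sub_ne_zero.2 (by
      have := hz2 (r + 1 : ℕ)
      rw [zpow_natCast] at this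
      exact this.symm)
    have c3 : q ^ r * (1 + q * q ^ d) * (1 - z ^ 2 * q ^ (r + 1)) ≠ 0 :=
      mul_ne_zero (mul_ne_zero (pow_ne_zero _ hq0) c1) c2
    apply mul_left_cancel₀ c3
    generalize q ^ (-((r + 1).choose 2 : ℤ)) = κ at *
    generalize qPoch (q * (z * q) ^ 2) (q ^ 2) r = Z2 at *
    generalize qPoch (q * z ^ 2) (q ^ 2) r = Z at *
    generalize Sg q ((z * q) ^ 2) (gfun q w (z * q) n) r = S2 at *
    generalize Sg q (z ^ 2) (gfun q w z n) r = S0 at *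
    generalize Sg q (z ^ 2) (gfun q w z n) (r + 1) = S1 at *
    generalize qPoch (-q) q d = P at *
    generalize qPoch (w ^ 2) q n = W at *
    generalize qPoch (q * w ^ 2) (q ^ 2) n = C at *
    linear_combination C * hA + (1 - q * z ^ 2 * (q ^ 2) ^ r) * i0 +
      q ^ r * (1 - q * z ^ 2) * i2 +
      q ^ r * W * κ * q ^ r * P * (1 + q * q ^ d) * S2 * hZ -
      W * κ * q ^ r * P * (1 + q * q ^ d) * Z * (1 - q * z ^ 2 * (q ^ 2) ^ r) * hS

theorem term6 (q w z : F) (n r : ℕ)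
    (hq0 : q ≠ 0) (hw0 : w ≠ 0) (hz0 : z ≠ 0)
    (hq : ∀ m : ℤ, m ≠ 0 → q ^ m ≠ 1)
    (hwz : ∀ m : ℤ, w * z * q ^ m ≠ 1 ∧ w * z⁻¹ * q ^ m ≠ 1)
    (hz2 : ∀ m : ℤ, z ^ 2 * q ^ m ≠ 1)
    (hz1 : ∀ m : ℤ, z * q ^ m ≠ 1 ∧ z * q ^ m ≠ -1) (i : ℕ) :
    qPoch (w * z) q n * qPoch (w / z) q n / qPoch (q * z ^ 2) q r *
      ((qPoch (z ^ 2) q i * qPoch (q * z) q i * qPoch (-(q * z)) q i *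
              qPoch (q ^ n * w * z) q i * qPoch (q * z / w) q i *
              qPoch (q ^ (-(r : ℤ))) q i) /
            (qPoch z q i * qPoch (-z) q i * qPoch (w * z) q i *
              qPoch (q ^ (1 - (n : ℤ)) * z / w) q i * qPoch (q ^ (r + 1) * z ^ 2) q i) *
            (-(q ^ ((r : ℤ) - (n : ℤ)))) ^ i / qPoch q q i) =
    bco q r i * (1 - z ^ 2 * q ^ (2 * i)) / qPoch (z ^ 2 * q ^ i) q (r + 1) *
      gfun q w z n i := by
  have nz : ∀ {x : F}, x ≠ 1 → 1 - x ≠ 0 := fun h => sub_ne_zero.2 h.symm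
  have hz2N : ∀ m : ℕ, z ^ 2 * q ^ m ≠ 1 := fun m => by
    have := hz2 m
    rwa [zpow_natCast] at this
  induction i with
  | zero =>
    have h1 := qPoch_shift (z ^ 2) q r
    have h2 := qPoch_succ' (z ^ 2) q r
    have h3 : 1 - z ^ 2 ≠ 0 := nz (by simpa using hz2N 0)
    have h4 : qPoch (z ^ 2) q (r + 1) = (1 - z ^ 2) * qPoch (q * z ^ 2) q r := by
      rw [h2, ← h1, mul_comm q]
    simp only [gfun, bco_zero, qPoch_zero', pow_zero, mul_one, mul_zero, inv_one, h4]
    have h5 : qPoch (q * z ^ 2) q r ≠ 0 := qPoch_ne _ _ _ fun l => by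
      have := hz2N (l + 1)
      intro h; apply this; rw [← h]; ring
    field_simp
  | succ i ih =>
    have hX : q ^ i ≠ 0 := pow_ne_zero _ hq0
    have hQ : q ^ n ≠ 0 := pow_ne_zero _ hq0
    have hR : q ^ r ≠ 0 := pow_ne_zero _ hq0
    have g1 := qPoch_shift (w * z * q ^ i) q n
    have g2 := qPoch_shift (w / z * (q ^ (i + 1))⁻¹) q n
    have g3 := qPoch_shift (z ^ 2 * q ^ i) q (r + 1)
    rw [show w * z * q ^ i * q = w * z * q ^ (i + 1) by ring] at g1
    rw [show w / z * (q ^ (i + 1))⁻¹ * q = w / z * (q ^ i)⁻¹ by field_simp; ring] at g2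
    rw [show z ^ 2 * q ^ i * q = z ^ 2 * q ^ (i + 1) by ring] at g3
    have m1 : 1 - w * z * q ^ i ≠ 0 := nz (by simpa using (hwz i).1)
    have m2 : 1 - w / z * (q ^ (i + 1))⁻¹ * q ^ n ≠ 0 := nz (by
      have := (hwz ((n : ℤ) - (i + 1 : ℕ))).2
      rw [zpow_sub₀ hq0, zpow_natCast, zpow_natCast] at this
      intro h; apply this; rw [← h]; field_simp)
    have m3 : 1 - z ^ 2 * q ^ i ≠ 0 := nz (hz2N i)
    have m4 : 1 - z ^ 2 * q ^ i * q ^ (r + 1) ≠ 0 := nz (by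
      have := hz2N (i + (r + 1))
      rwa [pow_add, ← mul_assoc] at this)
    have m5 : 1 - z * q ^ i ≠ 0 := nz (by simpa using (hz1 i).1)
    have m6 : 1 + z * q ^ i ≠ 0 := by
      have := (hz1 i).2
      rw [zpow_natCast] at this
      intro h; apply this; linear_combination h
    have m7 : 1 - q * q ^ i ≠ 0 := nz (by
      have := hq (i + 1 : ℕ) (by omega)
      rwa [zpow_natCast, pow_succ'] at this)
    have p1 : qPoch (z ^ 2 * q ^ i) q (r + 1) ≠ 0 := qPoch_ne _ _ _ fun l => by
      have := hz2N (i + l)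
      rwa [pow_add, ← mul_assoc] at this
    have b1 : bco q r (i + 1) = bco q r i * ((q ^ i - q ^ r) / (1 - q * q ^ i)) := by
      unfold bco
      rw [Finset.prod_range_succ, qPoch_succ']
      rw [div_mul_div_comm]
    have gg : gfun q w z n (i + 1) = gfun q w z n i *
        ((1 - w * z * q ^ i * q ^ n) / (1 - w * z * q ^ i) *
          ((1 - w / z * (q ^ (i + 1))⁻¹) / (1 - w / z * (q ^ (i + 1))⁻¹ * q ^ n))) := by
      unfold gfun
      rw [eq_div_of_mul_eq m1 ((mul_comm _ _).trans g1), eq_div_of_mul_eq m2 g2.symm]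
      simp only [div_eq_mul_inv]
      ring
    have p2 : (qPoch (z ^ 2 * q ^ (i + 1)) q (r + 1))⁻¹ =
        (qPoch (z ^ 2 * q ^ i) q (r + 1))⁻¹ *
          ((1 - z ^ 2 * q ^ i) / (1 - z ^ 2 * q ^ i * q ^ (r + 1))) := by
      rw [eq_div_of_mul_eq m3 ((mul_comm _ _).trans g3), inv_div, div_eq_mul_inv, div_eq_mul_inv,
        mul_inv]
      ring
    have rhs : bco q r (i + 1) * (1 - z ^ 2 * q ^ (2 * (i + 1))) /
        qPoch (z ^ 2 * q ^ (i + 1)) q (r + 1) * gfun q w z n (i + 1) =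
        (bco q r i * (1 - z ^ 2 * q ^ (2 * i)) / qPoch (z ^ 2 * q ^ i) q (r + 1) *
          gfun q w z n i) * (((q ^ i - q ^ r) / (1 - q * q ^ i)) *
          ((1 - z ^ 2 * q ^ (2 * (i + 1))) / ((1 - z * q ^ i) * (1 + z * q ^ i))) *
          ((1 - z ^ 2 * q ^ i) / (1 - z ^ 2 * q ^ i * q ^ (r + 1))) *
          ((1 - w * z * q ^ i * q ^ n) / (1 - w * z * q ^ i) *
          ((1 - w / z * (q ^ (i + 1))⁻¹) / (1 - w / z * (q ^ (i + 1))⁻¹ * q ^ n)))) := by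
      rw [b1, gg, div_eq_mul_inv _ (qPoch (z ^ 2 * q ^ (i + 1)) q (r + 1)), p2,
        show 1 - z ^ 2 * q ^ (2 * i) = (1 - z * q ^ i) * (1 + z * q ^ i) by ring]
      generalize 1 - z * q ^ i = E1 at *
      generalize 1 + z * q ^ i = E2 at *
      generalize (1 - z ^ 2 * q ^ i) / (1 - z ^ 2 * q ^ i * q ^ (r + 1)) = E3 at *
      generalize (1 - w * z * q ^ i * q ^ n) / (1 - w * z * q ^ i) *
          ((1 - w / z * (q ^ (i + 1))⁻¹) / (1 - w / z * (q ^ (i + 1))⁻¹ * q ^ n)) = E4 at *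
      generalize (q ^ i - q ^ r) / (1 - q * q ^ i) = E5 at *
      field_simp
    rw [rhs, ← ih]
    clear rhs ih b1 gg p2 g1 g2 g3 p1
    have hr1 : q ^ (1 - (n : ℤ)) = q * (q ^ n)⁻¹ := by
      rw [zpow_sub₀ hq0, zpow_one, zpow_natCast, div_eq_mul_inv]
    have hr2 : q ^ ((r : ℤ) - (n : ℤ)) = q ^ r * (q ^ n)⁻¹ := by
      rw [zpow_sub₀ hq0, zpow_natCast, zpow_natCast, div_eq_mul_inv]
    have hr3 : q ^ (-(r : ℤ)) = (q ^ r)⁻¹ := by rw [zpow_neg, zpow_natCast]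
    rw [hr1, hr2, hr3]
    have key : (1 - z ^ 2 * q ^ i) * (1 - q * z * q ^ i) * (1 - -(q * z) * q ^ i) *
        (1 - q ^ n * w * z * q ^ i) * (1 - q * z / w * q ^ i) * (1 - (q ^ r)⁻¹ * q ^ i) /
        ((1 - z * q ^ i) * (1 - -z * q ^ i) * (1 - w * z * q ^ i) *
          (1 - q * (q ^ n)⁻¹ * z / w * q ^ i) * (1 - q ^ (r + 1) * z ^ 2 * q ^ i)) *
          (-(q ^ r * (q ^ n)⁻¹)) / (1 - q * q ^ i) =
        ((q ^ i - q ^ r) / (1 - q * q ^ i)) *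
          ((1 - z ^ 2 * q ^ (2 * (i + 1))) / ((1 - z * q ^ i) * (1 + z * q ^ i))) *
          ((1 - z ^ 2 * q ^ i) / (1 - z ^ 2 * q ^ i * q ^ (r + 1))) *
          ((1 - w * z * q ^ i * q ^ n) / (1 - w * z * q ^ i) *
          ((1 - w / z * (q ^ (i + 1))⁻¹) / (1 - w / z * (q ^ (i + 1))⁻¹ * q ^ n))) := by
      have k1 : 1 - q * (q ^ n)⁻¹ * z / w * q ^ i =
          -(q * (q ^ n)⁻¹ * z / w * q ^ i) * (1 - w / z * (q ^ (i + 1))⁻¹ * q ^ n) := by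
        field_simp; ring
      have k2 : 1 - q * z / w * q ^ i =
          -(q * z / w * q ^ i) * (1 - w / z * (q ^ (i + 1))⁻¹) := by
        field_simp; ring
      rw [k1, k2, show 1 - -z * q ^ i = 1 + z * q ^ i by ring,
        show 1 - q ^ (r + 1) * z ^ 2 * q ^ i = 1 - z ^ 2 * q ^ i * q ^ (r + 1) by ring,
        show 1 - q ^ n * w * z * q ^ i = 1 - w * z * q ^ i * q ^ n by ring,
        show 1 - z ^ 2 * q ^ (2 * (i + 1)) = (1 - q * z * q ^ i) * (1 - -(q * z) * q ^ i) by ring,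
        show 1 - (q ^ r)⁻¹ * q ^ i = -(q ^ r)⁻¹ * (q ^ i - q ^ r) by field_simp; ring]
      generalize 1 - w / z * (q ^ (i + 1))⁻¹ * q ^ n = E1 at *
      generalize 1 - w / z * (q ^ (i + 1))⁻¹ = E2 at *
      generalize 1 + z * q ^ i = E3 at *
      generalize 1 - z ^ 2 * q ^ i * q ^ (r + 1) = E4 at *
      generalize 1 - w * z * q ^ i * q ^ n = E5 at *
      generalize 1 - w * z * q ^ i = E6 at *
      generalize 1 - z * q ^ i = E7 at *
      generalize 1 - q * q ^ i = E8 at *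
      generalize 1 - z ^ 2 * q ^ i = E9 at *
      generalize 1 - q * z * q ^ i = E10 at *
      generalize 1 - -(q * z) * q ^ i = E11 at *
      generalize q ^ i - q ^ r = E12 at *
      field_simp
    rw [← key]
    simp only [qPoch_succ', pow_succ _ i]
    simp only [div_eq_mul_inv, mul_inv]
    ring

theorem fin_alg (a1 a2 a3 a4 a5 a6 a7 a8 a9 S1 S2 : F) (pu : a1 ≠ 0) (pv : a2 ≠ 0)
    (pW : a3 ≠ 0) (pz : a4 ≠ 0)
    (h : a6 * (a7 * a1 * S1) = a3 * (a9 * a8 * a5 * (a1 * a2 / a4 * S2))) :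
    (a6 / a3) * (a7 / a2) * S1 = a9 * a8 * (a5 / a4) * S2 := by
  apply mul_left_cancel₀ pu
  field_simp at h ⊢
  linear_combination h

end aux3

/-- Theorem 9: transformation between a terminating ₄φ₃ and a terminating
very-well-poised ₆φ₅ (both written as finite sums thanks to the factors
`(q^{-n};q)_i` and `(q^{-r};q)_i`). -/
theorem stmt13 {F : Type*} [Field F] (q w z : F) (n r : ℕ) (hr : r ≤ n) (hn : 0 < n)
    (hq0 : q ≠ 0) (hw0 : w ≠ 0) (hz0 : z ≠ 0)
    (hq : ∀ m : ℤ, m ≠ 0 → q ^ m ≠ 1)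
    (hw2 : ∀ m : ℤ, w ^ 2 * q ^ m ≠ 1)
    (hwz : ∀ m : ℤ, w * z * q ^ m ≠ 1 ∧ w * z⁻¹ * q ^ m ≠ 1)
    (hz2 : ∀ m : ℤ, z ^ 2 * q ^ m ≠ 1)
    (hz1 : ∀ m : ℤ, z * q ^ m ≠ 1 ∧ z * q ^ m ≠ -1) :
    (qPoch (q * w ^ 2) (q ^ 2) n / qPoch (w ^ 2) q n) *
      (qPoch (q ^ (-(r : ℤ)) * w / z) q n / qPoch (w / z) q n) *
      ∑ i ∈ Finset.range (n + 1),
        (qPoch (w / z) q i * qPoch (q ^ r * w * z) q i * qPoch (w ^ 2 / q) q i *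
            qPoch (q ^ (-(n : ℤ))) q i) /
          (qPoch (w * z) q i * qPoch (q ^ (-(r : ℤ)) * w / z) q i *
            qPoch (q ^ n * w ^ 2) q i) *
          (-(q ^ (n - r + 1))) ^ i / qPoch q q i
    = q ^ (-(r.choose 2 : ℤ)) * qPoch (-q) q (n - r) *
        (qPoch (q * z ^ 2) (q ^ 2) r / qPoch (q * z ^ 2) q r) *
        ∑ i ∈ Finset.range (r + 1),
          (qPoch (z ^ 2) q i * qPoch (q * z) q i * qPoch (-(q * z)) q i *
              qPoch (q ^ n * w * z) q i * qPoch (q * z / w) q i *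
              qPoch (q ^ (-(r : ℤ))) q i) /
            (qPoch z q i * qPoch (-z) q i * qPoch (w * z) q i *
              qPoch (q ^ (1 - (n : ℤ)) * z / w) q i * qPoch (q ^ (r + 1) * z ^ 2) q i) *
            (-(q ^ ((r : ℤ) - (n : ℤ)))) ^ i / qPoch q q i := by
  have hS := main_ind q w n hq0 hw0 hq hw2 r z hr hz0 hwz hz2
  have ht : Sg q (z ^ 2) (gfun q w z n) r =
      qPoch (w * z) q n * qPoch (w / z) q n / qPoch (q * z ^ 2) q r *
        ∑ i ∈ Finset.range (r + 1),
          (qPoch (z ^ 2) q i * qPoch (q * z) q i * qPoch (-(q * z)) q i *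
              qPoch (q ^ n * w * z) q i * qPoch (q * z / w) q i *
              qPoch (q ^ (-(r : ℤ))) q i) /
            (qPoch z q i * qPoch (-z) q i * qPoch (w * z) q i *
              qPoch (q ^ (1 - (n : ℤ)) * z / w) q i * qPoch (q ^ (r + 1) * z ^ 2) q i) *
            (-(q ^ ((r : ℤ) - (n : ℤ)))) ^ i / qPoch q q i := by
    unfold Sg
    rw [Finset.mul_sum]
    exact Finset.sum_congr rfl fun i _ =>
      (term6 q w z n r hq0 hw0 hz0 hq hwz hz2 hz1 i).symm
  rw [ht] at hS
  unfold Afun phi4 at hS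
  have pu : qPoch (w * z) q n ≠ 0 := qPoch_ne _ _ _ fun l => by
    have := (hwz l).1; rwa [zpow_natCast] at this
  have pv : qPoch (w / z) q n ≠ 0 := qPoch_ne _ _ _ fun l => by
    have := (hwz l).2; rwa [zpow_natCast, ← div_eq_mul_inv] at this
  have pW : qPoch (w ^ 2) q n ≠ 0 := qPoch_ne _ _ _ fun l => by
    have := hw2 l; rwa [zpow_natCast] at this
  have pz : qPoch (q * z ^ 2) q r ≠ 0 := qPoch_ne _ _ _ fun l => by
    have := hz2 (l + 1 : ℕ)
    rw [zpow_natCast] at this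
    intro h; apply this; rw [← h]; ring
  exact fin_alg _ _ _ _ _ _ _ _ _ _ _ pu pv pW pz hS
end

section
/- Let x_1,…,x_n, z and q be indeterminates, and 0 ≤ r ≤ n integers. Then ∑_{σ∈{-1,+1}^n} ∏_{i=1}^n ((1-q x_i^{2σ_i})/(1-x_i^{2σ_i})) · ((1-q^r z x_i^{-σ_i})/(1-z x_i^{-σ_i})) · ∏_{1≤i<j≤n} (1-q x_i^{σ_i} x_j^{σ_j})/(1-x_i^{σ_i} x_j^{σ_j}) = q^{n r - binom(r,2)} (-q;q)_{n-r} ((q z^2;q^2)_r/(q z^2;q)_r) · _{2n+4}φ_{2n+3}[ z^2, q z, -q z, q^{-r}, {q z x_i, q z/x_i}_{i=1..n} ; z, -z, q^{r+1} z^2, {z x_i, z/x_i}_{i=1..n} ; q, -q^{r-n} ]. -/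
open Finset

/-- `x_i^{σ_i}`: the variable `x i` raised to the sign `σ i` (`true` = `+1`). -/
def sgnVar {F : Type*} [Field F] {n : ℕ} (x : Fin n → F) (σ : Fin n → Bool) (i : Fin n) : F :=
  if σ i then x i else (x i)⁻¹

namespace VWP

/-- sum over all sign choices -/
def PS {F M : Type*} [Field F] [AddCommMonoid M] : List F → (List F → M) → M
  | [], f => f []
  | a :: l, f => PS l (fun m => f (a :: m)) + PS l (fun m => f (a⁻¹ :: m))

def phi {F : Type*} [Field F] (q p : F) : F := (1 - q * p) / (1 - p)

def wt {F : Type*} [Field F] (q : F) (g : F → F) (s : F) : F :=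
  (1 - q * s ^ 2) / (1 - s ^ 2) * g s

def W {F : Type*} [Field F] (q : F) (g : F → F) : List F → F
  | [] => 1
  | a :: l => wt q g a * (l.map (fun b => phi q (a * b))).prod * W q g l

def Sgn {F : Type*} [Field F] (l m : List F) : Prop :=
  List.Forall₂ (fun a b => b = a ∨ b = a⁻¹) l m

section
variable {F M : Type*} [Field F] [AddCommMonoid M]

lemma PS_congr (l : List F) : ∀ (f g : List F → M), (∀ m, Sgn l m → f m = g m) →
    PS l f = PS l g := by
  induction l with
  | nil => intro f g h; exact h [] List.Forall₂.nil
  | cons a l ih =>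
    intro f g h
    simp only [PS]
    rw [ih _ (fun m => g (a :: m)) (fun m hm => h _ (List.Forall₂.cons (Or.inl rfl) hm)),
      ih _ (fun m => g (a⁻¹ :: m)) (fun m hm => h _ (List.Forall₂.cons (Or.inr rfl) hm))]

lemma PS_add (l : List F) : ∀ (f g : List F → M), PS l (fun m => f m + g m) = PS l f + PS l g := by
  induction l with
  | nil => intro f g; rfl
  | cons a l ih =>
    intro f g
    simp only [PS, ih]
    abel

lemma PS_hom {M' : Type*} [AddCommMonoid M'] (φ : M →+ M') (l : List F) :
    ∀ (f : List F → M), φ (PS l f) = PS l (fun m => φ (f m)) := by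
  induction l with
  | nil => intro f; rfl
  | cons a l ih => intro f; simp only [PS, map_add, ih]

lemma PS_zero (l : List F) : PS l (fun _ => (0 : M)) = 0 := by
  induction l with
  | nil => rfl
  | cons a l ih => simp only [PS, ih, add_zero]

lemma PS_mul_left (l : List F) (c : F) (f : List F → F) :
    PS l (fun m => c * f m) = c * PS l f :=
  (PS_hom (AddMonoidHom.mulLeft c) l f).symm

lemma PS_perm {l l' : List F} (h : l.Perm l') : ∀ (f : List F → M),
    (∀ m m' : List F, m.Perm m' → f m = f m') → PS l f = PS l' f := by
  induction h with
  | nil => intro f _; rfl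
  | cons a _ ih =>
    intro f hf
    simp only [PS]
    rw [ih _ (fun m m' h => hf _ _ (h.cons a)), ih _ (fun m m' h => hf _ _ (h.cons a⁻¹))]
  | swap a b l =>
    intro f hf
    simp only [PS]
    have e : ∀ c d : F, (fun m => f (c :: d :: m)) = fun m => f (d :: c :: m) := by
      intro c d; funext m; exact hf _ _ (List.Perm.swap _ _ _)
    rw [e b a, e b a⁻¹, e b⁻¹ a, e b⁻¹ a⁻¹]
    abel
  | trans _ _ ih1 ih2 => intro f hf; rw [ih1 f hf, ih2 f hf]

lemma PS_inv (a : F) (l : List F) (f : List F → M) : PS (a⁻¹ :: l) f = PS (a :: l) f := by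
  simp only [PS, inv_inv]
  rw [add_comm]

lemma W_perm (q : F) (g : F → F) {l l' : List F} (h : l.Perm l') : W q g l = W q g l' := by
  induction h with
  | nil => rfl
  | cons a h ih => simp only [W, ih, (h.map _).prod_eq]
  | swap a b l =>
    simp only [W, List.map_cons, List.prod_cons, mul_comm b a]
    ring
  | trans _ _ ih1 ih2 => rw [ih1, ih2]

lemma Sgn_length {l m : List F} (h : Sgn l m) : m.length = l.length := (List.Forall₂.length_eq h).symm

lemma Sgn_mem {l m : List F} (h : Sgn l m) : ∀ s ∈ m, s ∈ l ∨ s⁻¹ ∈ l := by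
  induction h with
  | nil => intro s hs; simp at hs
  | cons hab _ ih =>
    intro s hs
    rcases List.mem_cons.1 hs with rfl | hs
    · rcases hab with h | h
      · left; simp [h]
      · right; simp [h]
    · rcases ih s hs with h | h
      · left; exact List.mem_cons_of_mem _ h
      · right; exact List.mem_cons_of_mem _ h

lemma Sgn_prod {l m : List F} (h : Sgn l m) (k : F → F) (hk : ∀ s, k s⁻¹ = k s) :
    (m.map k).prod = (l.map k).prod := by
  induction h with
  | nil => rfl
  | cons hab _ ih =>
    simp only [List.map_cons, List.prod_cons, ih]
    rcases hab with h | h <;> simp [h, hk]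

lemma prod_map_congr {l : List F} {f g : F → F} (h : ∀ s ∈ l, f s = g s) :
    (l.map f).prod = (l.map g).prod := by
  rw [List.map_congr_left h]

lemma W_mul (q : F) (g h g' : F → F) : ∀ (m : List F), (∀ s ∈ m, h s * g s = g' s) →
    (m.map h).prod * W q g m = W q g' m := by
  intro m
  induction m with
  | nil => intro _; simp [W]
  | cons a m ih =>
    intro hh
    simp only [W, List.map_cons, List.prod_cons]
    rw [← ih (fun s hs => hh s (List.mem_cons_of_mem _ hs))]
    simp only [wt]
    rw [← hh a List.mem_cons_self]
    ring

/-- relation with sums over sign vectors -/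
lemma W_ofFn (q : F) (g : F → F) : ∀ {n : ℕ} (X : Fin n → F), W q g (List.ofFn X) =
    (∏ i, wt q g (X i)) * ∏ i, ∏ j ∈ Finset.Ioi i, phi q (X i * X j) := by
  intro n
  induction n with
  | zero => intro X; simp [W]
  | succ n ih =>
    intro X
    rw [List.ofFn_succ, W, ih, Fin.prod_univ_succ, Fin.prod_univ_succ (n := n) (fun i => ∏ j ∈ Finset.Ioi i, _)]
    simp only [Fin.prod_Ioi_zero, Fin.prod_Ioi_succ, List.map_ofFn, List.prod_ofFn, Function.comp]
    ring

lemma PS_ofFn : ∀ {n : ℕ} (x : Fin n → F) (f : List F → M), PS (List.ofFn x) f =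
    ∑ σ : Fin n → Bool, f (List.ofFn (sgnVar x σ)) := by
  intro n
  induction n with
  | zero => intro x f; simp [PS]
  | succ n ih =>
    intro x f
    rw [List.ofFn_succ, PS, ih, ih, ← (Fin.consEquiv (fun _ => Bool)).sum_comp,
      Fintype.sum_prod_type, Fintype.sum_bool]
    have e : ∀ (b : Bool) (σ : Fin n → Bool), List.ofFn (sgnVar x (Fin.cons b σ)) =
        (if b then x 0 else (x 0)⁻¹) :: List.ofFn (sgnVar (fun i => x i.succ) σ) := by
      intro b σ
      rw [List.ofFn_succ]
      simp [sgnVar]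
      rfl
    have e2 : ∀ (b : Bool) (σ : Fin n → Bool),
        (Fin.consEquiv (fun _ => Bool)) (b, σ) = Fin.cons b σ := fun _ _ => rfl
    simp only [e2, e]
    simp
end

section
open Polynomial
variable {F : Type*} [Field F]

noncomputable def KP (q : F) (G H : F[X]) (m : List F) : F[X] :=
  (1 - C q * X ^ 2) * G * (m.map (fun s => (1 - C (q * s) * X) * (1 - C s⁻¹ * X))).prod +
  (C q - X ^ 2) * H * (m.map (fun s => (C q - C s⁻¹ * X) * (1 - C s * X))).prod

noncomputable def NP (q : F) (g : F → F) (G H : F[X]) (l : List F) : F[X] :=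
  PS l (fun m => C (W q g m) * KP q G H m)

noncomputable def DP (l : List F) : F[X] :=
  (1 - X ^ 2) * (l.map (fun s => (1 - C s * X) * (1 - C s⁻¹ * X))).prod

/-- evaluated kernel -/
def KE (q : F) (G H : F) (T : F) (m : List F) : F :=
  (1 - q * T ^ 2) * G * (m.map (fun s => (1 - q * s * T) * (1 - s⁻¹ * T))).prod +
  (q - T ^ 2) * H * (m.map (fun s => (q - s⁻¹ * T) * (1 - s * T))).prod

lemma eval_list_prod (T : F) (k : F → F[X]) (m : List F) :
    eval T (m.map k).prod = (m.map (fun s => eval T (k s))).prod := by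
  rw [Polynomial.eval_list_prod, List.map_map]; rfl

lemma NP_eval (q : F) (g : F → F) (G H : F[X]) (l : List F) (T : F) :
    eval T (NP q g G H l) = PS l (fun m => W q g m * KE q (eval T G) (eval T H) T m) := by
  have := PS_hom (Polynomial.evalRingHom T).toAddMonoidHom l (fun m => C (W q g m) * KP q G H m)
  simp only [RingHom.toAddMonoidHom_eq_coe, AddMonoidHom.coe_coe, coe_evalRingHom] at this
  rw [NP, this]
  congr 1
  funext m
  simp only [KP, KE, eval_mul, eval_add, eval_sub, eval_one, eval_pow, eval_C, eval_X,
    eval_list_prod]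

lemma DP_eval (l : List F) (T : F) : eval T (DP l) =
    (1 - T ^ 2) * (l.map (fun s => (1 - s * T) * (1 - s⁻¹ * T))).prod := by
  simp only [DP, eval_mul, eval_sub, eval_one, eval_pow, eval_C, eval_X, eval_list_prod]

lemma KE_perm (q G H T : F) {m m' : List F} (h : m.Perm m') : KE q G H T m = KE q G H T m' := by
  simp only [KE, (h.map _).prod_eq]

lemma list_prod_mul (m : List F) (f g : F → F) :
    (m.map f).prod * (m.map g).prod = (m.map (fun s => f s * g s)).prod := by
  rw [List.prod_map_mul]

/-- genericity of `T` with respect to `l` -/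
def Gen (T : F) (l : List F) : Prop :=
  T ≠ 0 ∧ T ^ 2 ≠ 1 ∧ ∀ x ∈ l, x ≠ 0 ∧ T * x ≠ 1 ∧ T ≠ x

lemma Gen_sgn {T : F} {l m : List F} (h : Gen T l) (hm : Sgn l m) : Gen T m := by
  refine ⟨h.1, h.2.1, fun x hx => ?_⟩
  rcases Sgn_mem hm x hx with h' | h'
  · exact h.2.2 x h'
  · obtain ⟨h1, h2, h3⟩ := h.2.2 _ h'
    have hx0 : x ≠ 0 := fun h0 => h1 (by simp [h0])
    refine ⟨hx0, fun h4 => h3 ?_, fun h4 => h2 ?_⟩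
    · exact eq_inv_of_mul_eq_one_left h4
    · rw [h4, mul_inv_cancel₀ hx0]

lemma Gen_inv {T : F} {l : List F} (h : Gen T l) : Gen T⁻¹ l := by
  refine ⟨inv_ne_zero h.1, fun h' => h.2.1 ?_, fun x hx => ?_⟩
  · rw [inv_pow] at h'; exact inv_eq_one.1 h'
  · obtain ⟨h1, h2, h3⟩ := h.2.2 _ hx
    refine ⟨h1, fun h4 => h3 ?_, fun h4 => h2 ?_⟩
    · exact ((inv_mul_eq_one₀ h.1).1 h4)
    · rw [← h4, mul_inv_cancel₀ h.1]

lemma NP_eval_gen (q : F) (g : F → F) (G H : F[X]) (e : ℕ)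
    (hG : ∀ s, s ≠ 0 → eval s G = s ^ e * g s) (hH : ∀ s, s ≠ 0 → eval s H = s ^ e * g s⁻¹)
    (l : List F) (T : F) (hT : Gen T l) :
    eval T (NP q g G H l) = eval T (DP l) * (T ^ e * PS (T :: l) (W q g)) := by
  rw [NP_eval, DP_eval, PS, ← PS_add, ← PS_mul_left, ← PS_mul_left]
  apply PS_congr
  intro m hm
  have hm' := Gen_sgn hT hm
  rw [← Sgn_prod hm (fun s => (1 - s * T) * (1 - s⁻¹ * T)) (by intro s; simp; ring)]
  rw [hG T hT.1, hH T hT.1] at *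
  have h1 : (m.map (fun s => (1 - s * T) * (1 - s⁻¹ * T))).prod *
      (m.map (fun b => phi q (T * b))).prod =
      (m.map (fun s => (1 - q * s * T) * (1 - s⁻¹ * T))).prod := by
    rw [list_prod_mul]
    apply prod_map_congr
    intro s hs
    obtain ⟨a, b, c⟩ := hm'.2.2 s hs
    have : 1 - T * s ≠ 0 := sub_ne_zero.2 (Ne.symm b)
    rw [phi, mul_comm s T]
    field_simp
  have h2 : (m.map (fun s => (1 - s * T) * (1 - s⁻¹ * T))).prod *
      (m.map (fun b => phi q (T⁻¹ * b))).prod =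
      (m.map (fun s => (q - s⁻¹ * T) * (1 - s * T))).prod := by
    rw [list_prod_mul]
    apply prod_map_congr
    intro s hs
    obtain ⟨a, b, c⟩ := hm'.2.2 s hs
    have h0 := hT.1
    have : T - s ≠ 0 := sub_ne_zero.2 c
    have e1 : phi q (T⁻¹ * s) = (T - q * s) / (T - s) := by
      rw [phi]
      have : 1 - T⁻¹ * s ≠ 0 := by
        intro h; apply this; field_simp at h; simpa using h
      field_simp
    rw [e1]
    field_simp
    ring
  have h3 : (1 - T ^ 2) * wt q g T = (1 - q * T ^ 2) * g T := by
    have : 1 - T ^ 2 ≠ 0 := sub_ne_zero.2 (Ne.symm hT.2.1)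
    rw [wt]; field_simp
  have h4 : (1 - T ^ 2) * wt q g T⁻¹ = (q - T ^ 2) * g T⁻¹ := by
    have h5 : T ^ 2 - 1 ≠ 0 := sub_ne_zero.2 (hT.2.1)
    have h0 := hT.1
    have e1 : wt q g T⁻¹ = (T ^ 2 - q) / (T ^ 2 - 1) * g T⁻¹ := by
      rw [wt]
      have : 1 - (T⁻¹) ^ 2 ≠ 0 := by
        intro h; apply h5; field_simp at h; simpa using h
      congr 1
      field_simp
    rw [e1]
    field_simp
    ring
  simp only [W, KE]
  rw [← h1, ← h2]
  linear_combination (-(T ^ e * W q g m * (m.map (fun s => (1 - s * T) * (1 - s⁻¹ * T))).prod *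
      (m.map (fun b => phi q (T * b))).prod)) * h3 -
    (T ^ e * W q g m * (m.map (fun s => (1 - s * T) * (1 - s⁻¹ * T))).prod *
      (m.map (fun b => phi q (T⁻¹ * b))).prod) * h4

lemma NP_eval_one (q : F) (g : F → F) (G H : F[X]) (hGH : eval 1 G = eval 1 H)
    (l : List F) (hl : ∀ x ∈ l, x ≠ 0) : eval 1 (NP q g G H l) = 0 := by
  rw [NP_eval, ← PS_zero (M := F) l]
  apply PS_congr
  intro m hm
  have h1 : (m.map (fun s => (1 - q * s * 1) * (1 - s⁻¹ * 1))).prod =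
      (m.map (fun s => (q - s⁻¹ * 1) * (1 - s * 1))).prod := by
    apply prod_map_congr
    intro s hs
    have : s ≠ 0 := by
      rcases Sgn_mem hm s hs with h | h
      · exact hl _ h
      · exact fun h0 => hl _ h (by simp [h0])
    field_simp
    ring
  rw [KE, h1, hGH]
  ring

lemma NP_eval_root (q : F) (g : F → F) (G H : F[X]) (e : ℕ)
    (hG : ∀ s, s ≠ 0 → eval s G = s ^ e * g s) (hH : ∀ s, s ≠ 0 → eval s H = s ^ e * g s⁻¹)
    (l : List F) (T : F) (hT : Gen T l) :
    PS (T :: l) (fun m => W q g m * KE q (eval T G) (eval T H) T m) = 0 := by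
  rw [PS, ← PS_add, ← PS_zero (M := F) l]
  apply PS_congr
  intro m hm
  have hm' := Gen_sgn hT hm
  have h0 := hT.1
  rw [hG T hT.1, hH T hT.1] at *
  have h1 : (m.map (fun b => phi q (T * b))).prod *
      (m.map (fun s => (q - s⁻¹ * T) * (1 - s * T))).prod =
      (m.map (fun s => (1 - q * T * s) * (q - T / s))).prod := by
    rw [list_prod_mul]
    apply prod_map_congr
    intro s hs
    obtain ⟨a, b, c⟩ := hm'.2.2 s hs
    have : 1 - T * s ≠ 0 := sub_ne_zero.2 (Ne.symm b)
    rw [phi]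
    field_simp
  have h2 : (m.map (fun b => phi q (T⁻¹ * b))).prod *
      (m.map (fun s => (1 - q * s * T) * (1 - s⁻¹ * T))).prod =
      (m.map (fun s => (1 - q * T * s) * (q - T / s))).prod := by
    rw [list_prod_mul]
    apply prod_map_congr
    intro s hs
    obtain ⟨a, b, c⟩ := hm'.2.2 s hs
    have : T - s ≠ 0 := sub_ne_zero.2 c
    have e1 : phi q (T⁻¹ * s) = (T - q * s) / (T - s) := by
      rw [phi]
      have : 1 - T⁻¹ * s ≠ 0 := by
        intro h; apply this; field_simp at h; simpa using h
      field_simp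
    rw [e1]
    field_simp
    ring
  have h3 : (1 - T ^ 2) * wt q g T = (1 - q * T ^ 2) * g T := by
    have : 1 - T ^ 2 ≠ 0 := sub_ne_zero.2 (Ne.symm hT.2.1)
    rw [wt]; field_simp
  have h4 : (1 - T ^ 2) * wt q g T⁻¹ = (q - T ^ 2) * g T⁻¹ := by
    have h5 : T ^ 2 - 1 ≠ 0 := sub_ne_zero.2 (hT.2.1)
    have e1 : wt q g T⁻¹ = (T ^ 2 - q) / (T ^ 2 - 1) * g T⁻¹ := by
      rw [wt]
      have : 1 - (T⁻¹) ^ 2 ≠ 0 := by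
        intro h; apply h5; field_simp at h; simpa using h
      congr 1
      field_simp
    rw [e1]
    field_simp
    ring
  simp only [W, KE, List.map_cons, List.prod_cons, inv_inv, inv_mul_cancel₀ h0,
    mul_assoc q T⁻¹ T, sub_self, mul_zero, zero_mul, zero_add, add_zero]
  generalize (m.map (fun s => (1 - q * T * s) * (q - T / s))).prod = Pi at *
  linear_combination ((q - T ^ 2) * (T ^ e * g T⁻¹) * (q - 1) * (1 - T ^ 2) * W q g m * wt q g T) * h1
    + ((1 - q * T ^ 2) * (T ^ e * g T) * (1 - q) * (1 - T ^ 2) * W q g m * wt q g T⁻¹) * h2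
    + (W q g m * T ^ e * Pi * (q - T ^ 2) * g T⁻¹ * (q - 1)) * h3
    + (W q g m * T ^ e * Pi * (1 - q * T ^ 2) * g T * (1 - q)) * h4

def Good (l : List F) : Prop :=
  (∀ x ∈ l, x ≠ 0 ∧ x ^ 2 ≠ 1) ∧ l.Pairwise (fun a b => a * b ≠ 1 ∧ a ≠ b)

lemma Good_perm {l l' : List F} (h : l.Perm l') (hl : Good l) : Good l' := by
  refine ⟨fun x hx => hl.1 x (h.mem_iff.2 hx), ?_⟩
  refine (h.pairwise_iff ?_).1 hl.2
  intro a b hab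
  exact ⟨by rw [mul_comm]; exact hab.1, hab.2.symm⟩

lemma Good_cons {a : F} {l : List F} (h : Good (a :: l)) : Gen a l ∧ Good l := by
  obtain ⟨h1, h2⟩ := h
  rw [List.pairwise_cons] at h2
  refine ⟨⟨(h1 a List.mem_cons_self).1, (h1 a List.mem_cons_self).2, fun x hx =>
    ⟨(h1 x (List.mem_cons_of_mem _ hx)).1, h2.1 x hx⟩⟩, fun x hx => h1 x (List.mem_cons_of_mem _ hx), h2.2⟩

lemma NP_eval_mem (q : F) (g : F → F) (G H : F[X]) (e : ℕ)
    (hG : ∀ s, s ≠ 0 → eval s G = s ^ e * g s) (hH : ∀ s, s ≠ 0 → eval s H = s ^ e * g s⁻¹)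
    (l : List F) (hl : Good l) (x : F) (hx : x ∈ l) :
    eval x (NP q g G H l) = 0 ∧ eval x⁻¹ (NP q g G H l) = 0 := by
  obtain ⟨l', hp⟩ : ∃ l', l.Perm (x :: l') := by
    classical
    exact ⟨l.erase x, List.perm_cons_erase hx⟩
  have hg := (Good_cons (Good_perm hp hl)).1
  have key : ∀ T, eval T (NP q g G H l) =
      PS (x :: l') (fun m => W q g m * KE q (eval T G) (eval T H) T m) := by
    intro T
    rw [NP_eval]
    apply PS_perm hp
    intro m m' h
    rw [W_perm q g h, KE_perm _ _ _ _ h]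
  constructor
  · rw [key]; exact NP_eval_root q g G H e hG hH l' x hg
  · rw [key, ← PS_inv]; exact NP_eval_root q g G H e hG hH l' x⁻¹ (Gen_inv hg)

lemma natDegree_list_prod (k : F → F[X]) (hk : ∀ s, (k s).natDegree ≤ 2) (m : List F) :
    (m.map k).prod.natDegree ≤ 2 * m.length := by
  induction m with
  | nil => simp
  | cons a m ih =>
    simp only [List.map_cons, List.prod_cons, List.length_cons]
    refine natDegree_mul_le.trans ?_
    have := hk a
    omega

lemma PS_natDegree (l : List F) : ∀ (f : List F → F[X]) (d : ℕ),
    (∀ m, m.length = l.length → (f m).natDegree ≤ d) → (PS l f).natDegree ≤ d := by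
  induction l with
  | nil => intro f d h; exact h [] rfl
  | cons a l ih =>
    intro f d h
    refine (natDegree_add_le _ _).trans (max_le ?_ ?_)
    · exact ih _ d (fun m hm => h _ (by simp [hm]))
    · exact ih _ d (fun m hm => h _ (by simp [hm]))

lemma natDegree_mul3 {a b c : F[X]} {i j k : ℕ} (ha : a.natDegree ≤ i) (hb : b.natDegree ≤ j)
    (hc : c.natDegree ≤ k) : (a * b * c).natDegree ≤ i + j + k :=
  natDegree_mul_le.trans (add_le_add (natDegree_mul_le.trans (add_le_add ha hb)) hc)

lemma NP_natDegree (q : F) (g : F → F) (G H : F[X]) (d : ℕ) (hG : G.natDegree ≤ d)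
    (hH : H.natDegree ≤ d) (l : List F) :
    (NP q g G H l).natDegree ≤ 2 + d + 2 * l.length := by
  apply PS_natDegree
  intro m hm
  refine natDegree_mul_le.trans ?_
  rw [natDegree_C, zero_add, KP, ← hm]
  refine (natDegree_add_le _ _).trans (max_le ?_ ?_)
  · refine natDegree_mul3 (by compute_degree) hG (natDegree_list_prod _ (fun s => ?_) m)
    compute_degree
  · refine natDegree_mul3 (by compute_degree) hH (natDegree_list_prod _ (fun s => ?_) m)
    compute_degree

lemma DP_natDegree (l : List F) : (DP l).natDegree ≤ 2 + 2 * l.length := by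
  refine natDegree_mul_le.trans (add_le_add (by compute_degree) (natDegree_list_prod _ (fun s => ?_) l))
  compute_degree

lemma DP_eval_mem (l : List F) (hl : ∀ x ∈ l, x ≠ 0) (x : F) (hx : x ∈ l) :
    eval x (DP l) = 0 ∧ eval x⁻¹ (DP l) = 0 := by
  have h0 := hl x hx
  constructor
  · rw [DP_eval, List.prod_eq_zero, mul_zero]
    exact List.mem_map.2 ⟨x, hx, by simp [h0]⟩
  · rw [DP_eval, List.prod_eq_zero, mul_zero]
    exact List.mem_map.2 ⟨x, hx, by simp [h0]⟩

lemma DP_eval_ne (l : List F) (T : F) (hT : Gen T l) : eval T (DP l) ≠ 0 := by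
  rw [DP_eval]
  refine mul_ne_zero (sub_ne_zero.2 hT.2.1.symm) ?_
  rw [Ne, List.prod_eq_zero_iff, List.mem_map]
  rintro ⟨s, hs, h⟩
  obtain ⟨a, b, c⟩ := hT.2.2 s hs
  rcases mul_eq_zero.1 h with h | h
  · exact b (by rw [mul_comm]; exact (sub_eq_zero.1 h).symm)
  · exact c ((inv_mul_eq_one₀ a).1 (sub_eq_zero.1 h).symm).symm

lemma Good_nodup {l : List F} (hl : Good l) : (1 :: (l ++ l.map (·⁻¹))).Nodup := by
  rw [List.nodup_cons]
  constructor
  · rw [List.mem_append, List.mem_map]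
    rintro (h | ⟨a, ha, h⟩)
    · exact (hl.1 _ h).2 (one_pow 2)
    · exact (hl.1 _ ha).2 (by rw [inv_eq_one.1 h, one_pow])
  · have hn : l.Nodup := hl.2.imp (fun h => h.2)
    rw [List.nodup_append]
    refine ⟨hn, hn.map inv_injective, ?_⟩
    intro a ha b hb hab
    obtain ⟨c, hc, rfl⟩ := List.mem_map.1 hb
    have hc0 := (hl.1 c hc).1
    have h1 : a * c = 1 := by rw [hab, inv_mul_cancel₀ hc0]
    by_cases hac : a = c
    · subst hac
      exact (hl.1 a ha).2 (by rw [sq, h1])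
    · have : Std.Symm (fun a b : F => a * b ≠ 1 ∧ a ≠ b) :=
        ⟨fun x y h => ⟨by rw [mul_comm]; exact h.1, h.2.symm⟩⟩
      have := hl.2.forall ha hc hac
      exact this.1 h1

/-- interpolation principle -/
lemma interp (q : F) (g : F → F) (G H : F[X]) (e d : ℕ)
    (hG : ∀ s, s ≠ 0 → eval s G = s ^ e * g s) (hH : ∀ s, s ≠ 0 → eval s H = s ^ e * g s⁻¹)
    (hGd : G.natDegree ≤ d) (hHd : H.natDegree ≤ d)
    (l : List F) (hl : Good l) (R : F[X]) (hR : R.natDegree ≤ d)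
    (E : List F) (hEn : E.Nodup) (hEl : d + 2 ≤ E.length) (hEg : ∀ T ∈ E, Gen T l)
    (hE : ∀ T ∈ E, T ^ e * PS (T :: l) (W q g) = eval T R) :
    NP q g G H l = DP l * R := by
  classical
  rw [← sub_eq_zero]
  have hnd : (E ++ (1 :: (l ++ l.map (·⁻¹)))).Nodup := by
    rw [List.nodup_append]
    refine ⟨hEn, Good_nodup hl, ?_⟩
    intro a ha b hb hab
    subst hab
    obtain ⟨h1, h2, h3⟩ := hEg a ha
    rw [List.mem_cons, List.mem_append, List.mem_map] at hb
    rcases hb with h | h | ⟨c, hc, h⟩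
    · exact h2 (by rw [h, one_pow])
    · exact (h3 a h).2.2 rfl
    · exact (h3 c hc).2.1 (by rw [← h, inv_mul_cancel₀ (h3 c hc).1])
  apply Polynomial.eq_zero_of_natDegree_lt_card_of_eval_eq_zero' _
    (E ++ (1 :: (l ++ l.map (·⁻¹)))).toFinset
  · intro T hT
    rw [List.mem_toFinset, List.mem_append, List.mem_cons, List.mem_append, List.mem_map] at hT
    rw [eval_sub, eval_mul]
    rcases hT with h | h | h | ⟨c, hc, rfl⟩
    · rw [NP_eval_gen q g G H e hG hH l T (hEg T h), hE T h, sub_self]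
    · subst h
      rw [NP_eval_one, DP_eval]
      · simp
      · rw [hG 1 one_ne_zero, hH 1 one_ne_zero, inv_one]
      · exact fun x hx => (hl.1 x hx).1
    · rw [(NP_eval_mem q g G H e hG hH l hl T h).1, (DP_eval_mem l (fun x hx => (hl.1 x hx).1) T h).1]
      simp
    · rw [(NP_eval_mem q g G H e hG hH l hl c hc).2, (DP_eval_mem l (fun x hx => (hl.1 x hx).1) c hc).2]
      simp
  · rw [List.toFinset_card_of_nodup hnd]
    have h1 : (NP q g G H l - DP l * R).natDegree ≤ 2 + d + 2 * l.length := by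
      refine (natDegree_sub_le _ _).trans (max_le (NP_natDegree q g G H d hGd hHd l) ?_)
      refine natDegree_mul_le.trans ?_
      have := DP_natDegree l
      omega
    simp only [List.length_append, List.length_cons, List.length_map]
    omega

lemma interp_at (q : F) (g : F → F) (G H : F[X]) (e : ℕ)
    (hG : ∀ s, s ≠ 0 → eval s G = s ^ e * g s) (hH : ∀ s, s ≠ 0 → eval s H = s ^ e * g s⁻¹)
    (l : List F) (R : F[X]) (h : NP q g G H l = DP l * R) (T : F) (hT : Gen T l) :
    T ^ e * PS (T :: l) (W q g) = eval T R := by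
  have h1 := NP_eval_gen q g G H e hG hH l T hT
  rw [h, eval_mul] at h1
  exact (mul_left_cancel₀ (DP_eval_ne l T hT) h1).symm

/-- the case without the parameter `z` -/
lemma S_succ (q : F) (t z : F) (l : List F) (hl : Good l) (ht : Gen t l) (hz : Gen z l) :
    PS (t :: l) (W q (fun _ => 1)) = (1 + q ^ (l.length + 1)) * PS l (W q (fun _ => 1)) := by
  have hG : ∀ s : F, s ≠ 0 → eval s (1 : F[X]) = s ^ 0 * (fun _ => (1 : F)) s := by
    intro s _; simp
  have hH : ∀ s : F, s ≠ 0 → eval s (1 : F[X]) = s ^ 0 * (fun _ => (1 : F)) s⁻¹ := by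
    intro s _; simp
  have h := interp q (fun _ => 1) 1 1 0 0 hG hH (by simp) (by simp) l hl
    (C (PS (z :: l) (W q (fun _ => 1)))) (by simp) [z, z⁻¹] (by
      simp only [List.nodup_cons, List.mem_singleton, List.not_mem_nil, not_false_eq_true,
        List.nodup_nil, and_true]
      intro h
      apply hz.2.1
      rw [sq]; nth_rewrite 1 [h]; exact inv_mul_cancel₀ hz.1) (by simp) (by
      intro T hT
      simp only [List.mem_cons, List.not_mem_nil, or_false] at hT
      rcases hT with rfl | rfl
      · exact hz
      · exact Gen_inv hz) (by
      intro T hT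
      simp only [List.mem_cons, List.not_mem_nil, or_false] at hT
      rcases hT with rfl | rfl
      · simp
      · simp [PS_inv])
  have h1 := interp_at q (fun _ => 1) 1 1 0 hG hH l _ h t ht
  rw [pow_zero, one_mul, eval_C] at h1
  rw [h1]
  have h2 := NP_eval q (fun _ => 1) 1 1 l 0
  rw [h, eval_mul, eval_C, DP_eval] at h2
  simp only [KE, eval_one, mul_zero, sub_zero, mul_one, List.map_const', List.prod_replicate,
    one_pow, one_mul, ne_eq, OfNat.ofNat_ne_zero, not_false_eq_true, zero_pow] at h2
  rw [h2, ← PS_mul_left]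
  apply PS_congr
  intro m hm
  rw [Sgn_length hm]
  ring
end

section
open Polynomial
variable {F : Type*} [Field F]

lemma qPoch_succ (x q : F) (k : ℕ) : qPoch x q (k + 1) = qPoch x q k * (1 - x * q ^ k) := by
  rw [qPoch, Finset.prod_range_succ]; rfl

lemma qPoch_succ' (x q : F) (k : ℕ) : qPoch x q (k + 1) = (1 - x) * qPoch (x * q) q k := by
  rw [qPoch, Finset.prod_range_succ', pow_zero, mul_one, mul_comm, qPoch]
  congr 1
  apply Finset.prod_congr rfl
  intro l _
  rw [pow_succ]; ring

lemma qPoch_shift (x q : F) (k : ℕ) :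
    qPoch x q k * (1 - x * q ^ k) = (1 - x) * qPoch (x * q) q k := by
  rw [← qPoch_succ, qPoch_succ']

lemma qPoch_ne (x q : F) (k : ℕ) (h : ∀ l : ℕ, x * q ^ l ≠ 1) : qPoch x q k ≠ 0 :=
  Finset.prod_ne_zero_iff.2 (fun l _ => sub_ne_zero.2 (h l).symm)

def cc (q : F) (n r : ℕ) (z : F) (i : ℕ) : F :=
  q ^ ((n * r : ℤ) - (r.choose 2 : ℤ)) * qPoch (-q) q (n - r) *
    (qPoch (q * z ^ 2) (q ^ 2) r / qPoch (q * z ^ 2) q r) *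
    ((qPoch (z ^ 2) q i * ((1 - z ^ 2 * q ^ (2 * i)) / (1 - z ^ 2)) * qPoch (q ^ (-(r : ℤ))) q i) /
      (qPoch (q ^ (r + 1) * z ^ 2) q i * qPoch q q i) * (-(q ^ ((r : ℤ) - (n : ℤ)))) ^ i)

lemma pow_step (q : F) (hq0 : q ≠ 0) (n r : ℕ) :
    q ^ (((n + 1 : ℕ) * (r + 1 : ℕ) : ℤ) - ((r + 1).choose 2 : ℤ)) =
      q ^ (n + 1) * q ^ ((n * r : ℤ) - (r.choose 2 : ℤ)) := by
  rw [← zpow_natCast, ← zpow_add₀ hq0]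
  congr 1
  rw [Nat.choose_succ_succ' r 1, Nat.choose_one_right]
  push_cast
  ring

lemma cc_rec2 (q : F) (hq0 : q ≠ 0) (hq : ∀ m : ℤ, m ≠ 0 → q ^ m ≠ 1) (z : F)
    (hz2 : ∀ m : ℤ, z ^ 2 * q ^ m ≠ 1) (n r i : ℕ) :
    cc q (n + 1) (r + 1) z i * ((1 - z ^ 2 * q ^ i * q ^ (r + 1)) * (1 - (q ^ (r + 1))⁻¹ * q ^ i)) =
      q ^ (n + 1) * (1 - q ^ (2 * r + 1) * z ^ 2) * (1 - (q ^ (r + 1))⁻¹) * cc q n r z i := by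
  have hN : ∀ m : ℕ, 1 - z ^ 2 * q ^ m ≠ 0 := fun m =>
    sub_ne_zero.2 (by have := hz2 m; rw [zpow_natCast] at this; exact this.symm)
  have hz : ∀ (a : F) (m : ℕ) (k : ℕ), a = z ^ 2 * q ^ m → qPoch a q k ≠ 0 := by
    intro a m k h
    apply qPoch_ne
    intro l
    have := hz2 (m + l : ℕ)
    rw [zpow_natCast, pow_add] at this
    rw [h, mul_assoc]; exact this
  have hqq : qPoch q q i ≠ 0 := by
    apply qPoch_ne
    intro l
    have := hq (l + 1 : ℕ) (by positivity)
    rw [zpow_natCast, pow_succ'] at this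
    exact this
  have e1 : ((r + 1 : ℕ) : ℤ) - ((n + 1 : ℕ) : ℤ) = (r : ℤ) - n := by push_cast; ring
  have hx : q ^ (-((r + 1 : ℕ) : ℤ)) = (q ^ (r + 1))⁻¹ := by rw [zpow_neg, zpow_natCast]
  have hx' : q ^ (-(r : ℤ)) = (q ^ (r + 1))⁻¹ * q := by
    rw [zpow_neg, zpow_natCast, pow_succ]; field_simp
  have ha := qPoch_shift (q ^ (r + 1))⁻¹ q i
  have hb := qPoch_shift (q ^ (r + 1) * z ^ 2) q i
  have hy : q ^ (r + 1 + 1) * z ^ 2 = q ^ (r + 1) * z ^ 2 * q := by ring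
  have n1 := hN (r + 1)
  have n2 : 1 - q ^ (r + 1) * z ^ 2 ≠ 0 := by rw [mul_comm]; exact n1
  have n3 := hz (q ^ (r + 1) * z ^ 2) (r + 1) i (by ring)
  have n4 := hz (q ^ (r + 1) * z ^ 2 * q) (r + 2) i (by ring)
  have n5 := hz (q * z ^ 2) 1 r (by ring)
  have n6 := hN 0
  rw [pow_zero, mul_one] at n6
  have n7 : 1 - q ^ (r + 1) * z ^ 2 * q ^ i ≠ 0 := by
    have := hN (r + 1 + i); rw [pow_add] at this
    intro h; apply this; rw [← h]; ring
  have hb' : qPoch (q ^ (r + 1) * z ^ 2 * q) q i =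
      qPoch (q ^ (r + 1) * z ^ 2) q i * (1 - q ^ (r + 1) * z ^ 2 * q ^ i) /
      (1 - q ^ (r + 1) * z ^ 2) := by
    rw [hb]; field_simp
  simp only [cc]
  rw [pow_step q hq0, e1, hx, hx', hy, hb', Nat.add_sub_add_right, qPoch_succ _ (q ^ 2), qPoch_succ _ q r]
  have e2 : q * z ^ 2 * (q ^ 2) ^ r = q ^ (2 * r + 1) * z ^ 2 := by ring
  have e3 : q * z ^ 2 * q ^ r = q ^ (r + 1) * z ^ 2 := by ring
  have e4 : z ^ 2 * q ^ i * q ^ (r + 1) = q ^ (r + 1) * z ^ 2 * q ^ i := by ring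
  rw [e2, e3, e4]
  generalize qPoch ((q ^ (r + 1))⁻¹ * q) q i = A1 at *
  generalize qPoch ((q ^ (r + 1))⁻¹) q i = A2 at *
  generalize (-q ^ ((r : ℤ) - n)) ^ i = A3 at *
  generalize qPoch (q ^ (r + 1) * z ^ 2) q i = A4 at *
  generalize q ^ ((n * r : ℤ) - (r.choose 2 : ℤ)) = A5 at *
  generalize qPoch (-q) q (n - r) = A6 at *
  generalize qPoch (q * z ^ 2) (q ^ 2) r = A7 at *
  generalize qPoch (q * z ^ 2) q r = A8 at *
  generalize qPoch (z ^ 2) q i = A9 at *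
  generalize qPoch q q i = A10 at *
  generalize 1 - q ^ (r + 1) * z ^ 2 * q ^ i = A11 at *
  generalize 1 - q ^ (r + 1) * z ^ 2 = A12 at *
  generalize 1 - z ^ 2 * q ^ (2 * i) = A13 at *
  generalize 1 - z ^ 2 = A14 at *
  generalize 1 - q ^ (2 * r + 1) * z ^ 2 = A15 at *
  generalize 1 - (q ^ (r + 1))⁻¹ * q ^ i = A16 at *
  generalize 1 - (q ^ (r + 1))⁻¹ = A17 at *
  field_simp
  linear_combination (A3 * A5 * A6 * A7 * A9 * A13 * A15) * ha

lemma rec1_alg (A1 A3 A4 A5 A6 A7 A8 A9 A10 A12 A13 A14 A15 A16 A17 A18 B1 B2 B3 : F)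
    (h12 : A12 ≠ 0) (h17 : A17 ≠ 0) (h18 : A18 ≠ 0) :
    B2 * A5 * A6 * (A17 * A7 / (A17 * A15 * A8 / A12)) *
      (A9 * (A13 / A14) * ((1 - B3) * A1) / (A12 * A4 * (A10 * A18)) * (A3 * B1)) * (A16 * A18) =
      (B2 * B1) * (1 - B3) * (A9 * A16) *
        (A5 * A6 * A7 * A13 * A1 * A3 / (A15 * A8 * A14 * A4 * A10)) := by
  have e1 : A17 * A7 / (A17 * A15 * A8 / A12) = A12 * (A7 / (A15 * A8)) := by
    rw [div_div_eq_mul_div, mul_assoc, mul_assoc A17, mul_div_mul_left _ _ h17]; ring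
  have e2 : A9 * (A13 / A14) * ((1 - B3) * A1) / (A12 * A4 * (A10 * A18)) =
      A12⁻¹ * A18⁻¹ * (A9 * A13 * (1 - B3) * A1 / (A14 * A4 * A10)) := by
    simp only [div_eq_mul_inv, mul_inv]; ring
  rw [e1, e2]
  have e3 : A12 * A12⁻¹ = 1 := mul_inv_cancel₀ h12
  have e4 : A18 * A18⁻¹ = 1 := mul_inv_cancel₀ h18
  simp only [div_eq_mul_inv, mul_inv]
  linear_combination (B2 * A5 * A6 * A7 * A15⁻¹ * A8⁻¹ * A9 * A13 * A14⁻¹ * (1 - B3) * A1 * A4⁻¹ *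
    A10⁻¹ * A3 * B1 * A16) * (e3 * (A18 * A18⁻¹) + e4)

lemma cc_rec1 (q : F) (hq0 : q ≠ 0) (hq : ∀ m : ℤ, m ≠ 0 → q ^ m ≠ 1) (z : F)
    (hz2 : ∀ m : ℤ, z ^ 2 * q ^ m ≠ 1) (n r i : ℕ) :
    cc q (n + 1) (r + 1) z (i + 1) * ((1 - z ^ 2 * q ^ (i + 1)) * (1 - q ^ (i + 1))) =
      (1 - q * z ^ 2) * (1 - q ^ (r + 1)) * cc q n r (z * q) i := by
  have hN : ∀ m : ℕ, 1 - z ^ 2 * q ^ m ≠ 0 := fun m =>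
    sub_ne_zero.2 (by have := hz2 m; rw [zpow_natCast] at this; exact this.symm)
  have hz : ∀ (a : F) (m : ℕ) (k : ℕ), a = z ^ 2 * q ^ m → qPoch a q k ≠ 0 := by
    intro a m k h
    apply qPoch_ne
    intro l
    have := hz2 (m + l : ℕ)
    rw [zpow_natCast, pow_add] at this
    rw [h, mul_assoc]; exact this
  have hqq : qPoch q q i ≠ 0 := by
    apply qPoch_ne
    intro l
    have := hq (l + 1 : ℕ) (by positivity)
    rw [zpow_natCast, pow_succ'] at this
    exact this
  have n8 : 1 - q * q ^ i ≠ 0 := by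
    have := hq (i + 1 : ℕ) (by positivity)
    rw [zpow_natCast, pow_succ'] at this
    exact sub_ne_zero.2 this.symm
  have e1 : ((r + 1 : ℕ) : ℤ) - ((n + 1 : ℕ) : ℤ) = (r : ℤ) - n := by push_cast; ring
  have hx : q ^ (-((r + 1 : ℕ) : ℤ)) = (q ^ (r + 1))⁻¹ := by rw [zpow_neg, zpow_natCast]
  have hx' : q ^ (-(r : ℤ)) = (q ^ (r + 1))⁻¹ * q := by
    rw [zpow_neg, zpow_natCast, pow_succ]; field_simp
  have hp : q ^ (n + 1) * -(q ^ ((r : ℤ) - n)) = - q ^ (r + 1) := by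
    rw [mul_neg, ← zpow_natCast, ← zpow_add₀ hq0, ← zpow_natCast]
    congr 2
    push_cast; ring
  -- normal forms of the Pochhammer symbols
  have ha : qPoch (z ^ 2) q (i + 1) * (1 - z ^ 2 * q ^ (i + 1)) =
      (1 - z ^ 2) * (1 - q * z ^ 2) * qPoch ((z * q) ^ 2) q i := by
    rw [← qPoch_succ, qPoch_succ', qPoch_succ']
    rw [show z ^ 2 * q * q = (z * q) ^ 2 by ring]
    ring
  have hb : qPoch (q * z ^ 2) (q ^ 2) (r + 1) = (1 - q * z ^ 2) * qPoch (q * (z * q) ^ 2) (q ^ 2) r := by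
    rw [qPoch_succ', show q * z ^ 2 * q ^ 2 = q * (z * q) ^ 2 by ring]
  have hc : qPoch (q * z ^ 2) q (r + 1) * (1 - q ^ (r + 2) * z ^ 2) =
      (1 - q * z ^ 2) * (1 - z ^ 2 * q ^ 2) * qPoch (q * (z * q) ^ 2) q r := by
    rw [show q ^ (r + 2) * z ^ 2 = q * z ^ 2 * q ^ (r + 1) by ring, ← qPoch_succ, qPoch_succ',
      qPoch_succ', show q * z ^ 2 * q * q = q * (z * q) ^ 2 by ring]
    ring
  have hd : qPoch (q ^ (r + 1 + 1) * z ^ 2) q (i + 1) =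
      (1 - q ^ (r + 2) * z ^ 2) * qPoch (q ^ (r + 1) * (z * q) ^ 2) q i := by
    rw [qPoch_succ', show q ^ (r + 1 + 1) * z ^ 2 * q = q ^ (r + 1) * (z * q) ^ 2 by ring]
  have n1 : 1 - q ^ (r + 2) * z ^ 2 ≠ 0 := by have := hN (r + 2); rwa [mul_comm] at this
  have n2 := hN 2
  have n3 : 1 - q * z ^ 2 ≠ 0 := by have := hN 1; rwa [pow_one, mul_comm] at this
  have n4 := hz (q * (z * q) ^ 2) 3 r (by ring)
  have n5 := hz (q ^ (r + 1) * (z * q) ^ 2) (r + 3) i (by ring)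
  have n6 := hN 0
  rw [pow_zero, mul_one] at n6
  have n9 : q ^ (r + 1) ≠ 0 := pow_ne_zero _ hq0
  have hc' : qPoch (q * z ^ 2) q (r + 1) = (1 - q * z ^ 2) * (1 - z ^ 2 * q ^ 2) *
      qPoch (q * (z * q) ^ 2) q r / (1 - q ^ (r + 2) * z ^ 2) := by
    rw [← hc, mul_div_assoc, div_self n1, mul_one]
  simp only [cc]
  rw [pow_step q hq0, e1, hx, hx', hb, hc', hd, Nat.add_sub_add_right, qPoch_succ q q,
    qPoch_succ' (q ^ (r + 1))⁻¹, pow_succ (-(q ^ ((r : ℤ) - n)))]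
  rw [show (z * q) ^ 2 * q ^ (2 * i) = z ^ 2 * q ^ (2 * (i + 1)) by ring,
    show 1 - (z * q) ^ 2 = 1 - z ^ 2 * q ^ 2 by ring, pow_succ' q i]
  rw [pow_succ' q i] at ha
  generalize qPoch ((q ^ (r + 1))⁻¹ * q) q i = A1 at *
  generalize (-q ^ ((r : ℤ) - n)) ^ i = A3 at *
  generalize qPoch (q ^ (r + 1) * (z * q) ^ 2) q i = A4 at *
  generalize q ^ ((n * r : ℤ) - (r.choose 2 : ℤ)) = A5 at *
  generalize qPoch (-q) q (n - r) = A6 at *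
  generalize qPoch (q * (z * q) ^ 2) (q ^ 2) r = A7 at *
  generalize qPoch (q * (z * q) ^ 2) q r = A8 at *
  generalize qPoch (z ^ 2) q (i + 1) = A9 at *
  generalize qPoch ((z * q) ^ 2) q i = A2 at *
  generalize qPoch q q i = A10 at *
  generalize -q ^ ((r : ℤ) - n) = B1 at *
  generalize q ^ (n + 1) = B2 at *
  generalize q ^ (r + 1) = B3 at *
  generalize 1 - q ^ (r + 2) * z ^ 2 = A12 at *
  generalize 1 - z ^ 2 * q ^ (2 * (i + 1)) = A13 at *
  generalize 1 - z ^ 2 * (q * q ^ i) = A16 at *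
  generalize 1 - z ^ 2 * q ^ 2 = A15 at *
  generalize 1 - z ^ 2 = A14 at *
  generalize 1 - q * z ^ 2 = A17 at *
  generalize 1 - q * q ^ i = A18 at *
  have ha' : A9 * A16 = A14 * A17 * A2 := ha
  rw [rec1_alg A1 A3 A4 A5 A6 A7 A8 A9 A10 A12 A13 A14 A15 A16 A17 A18 B1 B2 B3⁻¹ n1 n3 n8, ha', hp]
  have e5 : -B3 * (1 - B3⁻¹) = 1 - B3 := by field_simp; ring
  rw [e5]
  field_simp

def gz (a z s : F) : F := (1 - a * z * s⁻¹) * (1 - z * s)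

def ZG (q z : F) (l : List F) : Prop :=
  z ≠ 0 ∧ (∀ m : ℤ, z ^ 2 * q ^ m ≠ 1) ∧ ∀ x ∈ l, ∀ m : ℤ, z * x * q ^ m ≠ 1 ∧ z * q ^ m ≠ x

lemma ZG_mul {q z : F} (hq0 : q ≠ 0) {l : List F} (h : ZG q z l) (k : ℕ) : ZG q (z * q ^ k) l := by
  refine ⟨mul_ne_zero h.1 (pow_ne_zero _ hq0), fun m => ?_, fun x hx m => ⟨?_, ?_⟩⟩
  · have := h.2.1 (k + k + m)
    rw [zpow_add₀ hq0, zpow_add₀ hq0, zpow_natCast] at this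
    intro h'; apply this; rw [← h']; ring
  · have := (h.2.2 x hx (k + m)).1
    rw [zpow_add₀ hq0, zpow_natCast] at this
    intro h'; apply this; rw [← h']; ring
  · have := (h.2.2 x hx (k + m)).2
    rw [zpow_add₀ hq0, zpow_natCast] at this
    intro h'; apply this; rw [← h']; ring

lemma ZG_gen {q z : F} {l : List F} (hl : Good l) (h : ZG q z l) : Gen z l := by
  refine ⟨h.1, ?_, fun x hx => ⟨(hl.1 x hx).1, ?_, ?_⟩⟩
  · have := h.2.1 0; simpa using this
  · have := (h.2.2 x hx 0).1; simpa using this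
  · have := (h.2.2 x hx 0).2; simpa using this

lemma ZG_tail {q z t : F} {l : List F} (h : ZG q z (t :: l)) : ZG q z l :=
  ⟨h.1, h.2.1, fun x hx => h.2.2 x (List.mem_cons_of_mem _ hx)⟩

lemma S_val (q z : F) : ∀ l : List F, Good l → ZG q z l →
    PS l (W q (fun _ => 1)) = qPoch (-q) q l.length := by
  intro l
  induction l with
  | nil => intro _ _; simp [PS, W, qPoch]
  | cons t l ih =>
    intro hl hz
    obtain ⟨h1, h2⟩ := Good_cons hl
    rw [S_succ q t z l h2 h1 (ZG_gen h2 (ZG_tail hz)), ih h2 (ZG_tail hz), List.length_cons,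
      qPoch_succ]
    ring

lemma main_zero (q z : F) (l : List F) (hl : Good l) (hz : ZG q z l) :
    PS l (W q (gz 1 z)) = qPoch (-q) q l.length *
      (l.map (fun x => (1 - z * x) * (1 - z * x⁻¹))).prod := by
  rw [← S_val q z l hl hz, mul_comm, ← PS_mul_left]
  apply PS_congr
  intro m hm
  rw [← Sgn_prod hm _ (by intro s; simp; ring)]
  rw [W_mul q (fun _ => 1) _ (gz 1 z)]
  intro s _
  simp only [gz]; ring

/-- specialization at `z` -/
lemma spec1 (q z : F) (r : ℕ) (l : List F) (hz : Gen z l) :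
    PS (z :: l) (W q (gz (q ^ (r + 1)) z)) =
      (1 - q * z ^ 2) * (1 - q ^ (r + 1)) * PS l (W q (gz (q ^ r) (z * q))) := by
  have h0 := hz.1
  have h1 : wt q (gz (q ^ (r + 1)) z) z⁻¹ = 0 := by simp [wt, gz, h0]
  have h2 : wt q (gz (q ^ (r + 1)) z) z = (1 - q * z ^ 2) * (1 - q ^ (r + 1)) := by
    have : 1 - z ^ 2 ≠ 0 := sub_ne_zero.2 hz.2.1.symm
    simp only [wt, gz]
    field_simp
  rw [PS]
  simp only [W, h1, h2, zero_mul, PS_zero, add_zero]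
  rw [← PS_mul_left]
  apply PS_congr
  intro m hm
  have hm' := Gen_sgn hz hm
  rw [mul_assoc, W_mul q (gz (q ^ (r + 1)) z) _ (gz (q ^ r) (z * q))]
  intro s hs
  obtain ⟨a, b, c⟩ := hm'.2.2 s hs
  have : 1 - z * s ≠ 0 := sub_ne_zero.2 b.symm
  simp only [phi, gz]
  field_simp
  ring

/-- specialization at `q ^ (r + 1) * z` -/
lemma spec2 (q z : F) (hq0 : q ≠ 0) (hz0 : z ≠ 0) (r : ℕ) (l : List F) (hz : Gen (z * q ^ (r + 1)) l) :
    PS ((z * q ^ (r + 1)) :: l) (W q (gz (q ^ (r + 1)) z)) =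
      q ^ (l.length + 1) * (1 - q ^ (2 * r + 1) * z ^ 2) * (1 - (q ^ (r + 1))⁻¹) *
        PS l (W q (gz (q ^ r) z)) := by
  have h0 := hz.1
  have hq1 : q ^ r ≠ 0 := pow_ne_zero _ hq0
  have h1 : wt q (gz (q ^ (r + 1)) z) (z * q ^ (r + 1)) = 0 := by
    simp only [wt, gz]
    rw [mul_comm (q ^ (r + 1)) z, mul_inv_cancel₀ h0]
    ring
  have h2 : wt q (gz (q ^ (r + 1)) z) (z * q ^ (r + 1))⁻¹ =
      q * (1 - q ^ (2 * r + 1) * z ^ 2) * (1 - (q ^ (r + 1))⁻¹) := by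
    have h5 : (z * q ^ (r + 1)) ^ 2 - 1 ≠ 0 := sub_ne_zero.2 hz.2.1
    simp only [wt, gz, inv_inv]
    have e1 : (1 - q * ((z * q ^ (r + 1))⁻¹) ^ 2) / (1 - ((z * q ^ (r + 1))⁻¹) ^ 2) =
        ((z * q ^ (r + 1)) ^ 2 - q) / ((z * q ^ (r + 1)) ^ 2 - 1) := by
      generalize z * q ^ (r + 1) = T at *
      have : 1 - (T⁻¹) ^ 2 ≠ 0 := by
        intro h; apply h5; field_simp at h; simpa using h
      field_simp
    have e2 : z * (z * q ^ (r + 1))⁻¹ = (q ^ (r + 1))⁻¹ := by field_simp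
    have e3 : 1 - q ^ (r + 1) * z * (z * q ^ (r + 1)) = - ((z * q ^ (r + 1)) ^ 2 - 1) := by ring
    have e4 : q * (1 - q ^ (2 * r + 1) * z ^ 2) = - ((z * q ^ (r + 1)) ^ 2 - q) := by ring
    rw [e1, e2, e3, e4]
    generalize (z * q ^ (r + 1)) ^ 2 - 1 = U at *
    field_simp
  rw [PS]
  simp only [W, h1, h2, zero_mul, PS_zero, zero_add]
  rw [← PS_mul_left]
  apply PS_congr
  intro m hm
  have hm' := Gen_sgn hz hm
  have e1 := W_mul q (gz (q ^ (r + 1)) z) (fun b => phi q ((z * q ^ (r + 1))⁻¹ * b))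
    (fun s => q * gz (q ^ r) z s) m (by
      intro s hs
      obtain ⟨a, b, c⟩ := hm'.2.2 s hs
      have : z * q ^ (r + 1) - s ≠ 0 := sub_ne_zero.2 c
      have e1 : phi q ((z * q ^ (r + 1))⁻¹ * s) =
          (z * q ^ (r + 1) - q * s) / (z * q ^ (r + 1) - s) := by
        rw [phi]
        generalize z * q ^ (r + 1) = T at *
        have : 1 - T⁻¹ * s ≠ 0 := by
          intro h; apply this; field_simp at h; simpa using h
        field_simp
      have e2 : 1 - q ^ (r + 1) * z * s⁻¹ = -((z * q ^ (r + 1) - s) / s) := by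
        field_simp; ring
      simp only [e1, gz, e2]
      field_simp
      ring)
  have e2 := W_mul q (gz (q ^ r) z) (fun _ => q) (fun s => q * gz (q ^ r) z s) m (fun _ _ => rfl)
  rw [mul_assoc, e1, ← e2, List.map_const', List.prod_replicate, Sgn_length hm]
  ring

lemma main_list (q : F) (hq0 : q ≠ 0) (hq : ∀ m : ℤ, m ≠ 0 → q ^ m ≠ 1) : ∀ l : List F, Good l →
    ∀ r : ℕ, r ≤ l.length → ∀ z : F, ZG q z l →
    PS l (W q (gz (q ^ r) z)) = ∑ i ∈ Finset.range (r + 1), cc q l.length r z i *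
      (l.map (fun x => (1 - z * q ^ i * x) * (1 - z * q ^ i * x⁻¹))).prod := by
  intro l hl r hr z hz
  have base : PS l (W q (gz (q ^ 0) z)) = ∑ i ∈ Finset.range (0 + 1), cc q l.length 0 z i *
      (l.map (fun x => (1 - z * q ^ i * x) * (1 - z * q ^ i * x⁻¹))).prod := by
    have h1 : 1 - z ^ 2 ≠ 0 := sub_ne_zero.2 (ZG_gen hl hz).2.1.symm
    rw [pow_zero, main_zero q z l hl hz]
    simp [cc, qPoch, h1]
  induction l generalizing r z with
  | nil =>
    have : r = 0 := by simpa using hr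
    subst this
    exact base
  | cons t l ih =>
    cases r with
    | zero => exact base
    | succ r =>
      clear base
      obtain ⟨ht, hl'⟩ := Good_cons hl
      have hz' := ZG_tail hz
      have ih' : ∀ w, ZG q w l → PS l (W q (gz (q ^ r) w)) =
          ∑ i ∈ Finset.range (r + 1), cc q l.length r w i *
          (l.map (fun x => (1 - w * q ^ i * x) * (1 - w * q ^ i * x⁻¹))).prod := by
        intro w hw
        apply ih hl' r (by simpa using hr) w hw
        have h1 : 1 - w ^ 2 ≠ 0 := sub_ne_zero.2 (ZG_gen hl' hw).2.1.symm
        rw [pow_zero, main_zero q w l hl' hw]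
        simp [cc, qPoch, h1]
      clear ih
      have hz0 := hz.1
      have hqr : q ^ (r + 1) ≠ 0 := pow_ne_zero _ hq0
      have g1 : Gen z l := ZG_gen hl' hz'
      have g2 : Gen (z * q ^ (r + 1)) l := ZG_gen hl' (ZG_mul hq0 hz' (r + 1))
      set P : ℕ → F := fun i =>
        (l.map (fun x => (1 - z * q ^ i * x) * (1 - z * q ^ i * x⁻¹))).prod with hP
      set a := q ^ (r + 1) with ha
      let G : F[X] := (X - C (a * z)) * (1 - C z * X)
      let H : F[X] := (1 - C (a * z) * X) * (X - C z)
      let R : F[X] := ∑ i ∈ Finset.range (r + 1 + 1),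
        C (cc q (l.length + 1) (r + 1) z i * P i) * ((1 - C (z * q ^ i) * X) * (X - C (z * q ^ i)))
      have hG : ∀ s, s ≠ 0 → eval s G = s ^ 1 * gz a z s := by
        intro s hs
        simp only [G, gz, eval_mul, eval_sub, eval_X, eval_C, eval_one]
        field_simp
      have hH : ∀ s, s ≠ 0 → eval s H = s ^ 1 * gz a z s⁻¹ := by
        intro s hs
        simp only [H, gz, eval_mul, eval_sub, eval_X, eval_C, eval_one, inv_inv]
        field_simp
      have hRe : ∀ T, eval T R = ∑ i ∈ Finset.range (r + 1 + 1),
          cc q (l.length + 1) (r + 1) z i * P i * ((1 - z * q ^ i * T) * (T - z * q ^ i)) := by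
        intro T
        simp only [R, eval_finsetSum, eval_mul, eval_sub, eval_X, eval_C, eval_one]
      have hRinv : ∀ T, T ≠ 0 → eval T⁻¹ R = (T⁻¹) ^ 2 * eval T R := by
        intro T hT
        rw [hRe, hRe, Finset.mul_sum]
        apply Finset.sum_congr rfl
        intro i _
        field_simp
      have v1 : z ^ 1 * PS (z :: l) (W q (gz a z)) = eval z R := by
        rw [ha, spec1 q z r l g1, ih' (z * q) (by have := ZG_mul hq0 hz' 1; rwa [pow_one] at this), hRe,
          Finset.sum_range_succ' _ (r + 1), pow_zero, mul_one, sub_self, mul_zero, mul_zero, add_zero,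
          Finset.mul_sum, Finset.mul_sum]
        apply Finset.sum_congr rfl
        intro i _
        have e1 : z * q * q ^ i = z * q ^ (i + 1) := by ring
        have e2 := cc_rec1 q hq0 hq z hz.2.1 l.length r i
        rw [e1]
        linear_combination (-(z * P (i + 1))) * e2
      have v2 : (z * a) ^ 1 * PS ((z * a) :: l) (W q (gz a z)) = eval (z * a) R := by
        rw [ha, spec2 q z hq0 hz0 r l g2, ih' z hz', hRe,
          Finset.sum_range_succ _ (r + 1), sub_self, mul_zero, mul_zero, add_zero,
          Finset.mul_sum, Finset.mul_sum]
        apply Finset.sum_congr rfl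
        intro i _
        have e2 := cc_rec2 q hq0 hq z hz.2.1 l.length r i
        have e3 : z * q ^ (r + 1) - z * q ^ i =
            z * q ^ (r + 1) * (1 - (q ^ (r + 1))⁻¹ * q ^ i) := by
          rw [← ha]; field_simp
        rw [e3]
        linear_combination (-(z * q ^ (r + 1) * P i)) * e2
      have inv_case : ∀ T, T ≠ 0 → T ^ 1 * PS (T :: l) (W q (gz a z)) = eval T R →
          (T⁻¹) ^ 1 * PS (T⁻¹ :: l) (W q (gz a z)) = eval T⁻¹ R := by
        intro T hT h
        rw [PS_inv, hRinv T hT, ← h]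
        field_simp
      have hz2 := hz.2.1
      have d1 : z ^ 2 ≠ 1 := g1.2.1
      have d2 : (z * a) ^ 2 ≠ 1 := g2.2.1
      have d3 : a ≠ 1 := by
        have := hq (r + 1 : ℕ) (by positivity)
        rwa [zpow_natCast] at this
      have d4 : z ^ 2 * a ≠ 1 := by
        have := hz2 (r + 1 : ℕ)
        rwa [zpow_natCast] at this
      have key := interp q (gz a z) G H 1 2 hG hH (by simp only [G]; compute_degree)
        (by simp only [H]; compute_degree) l hl' R (by
          apply natDegree_sum_le_of_forall_le
          intro i _
          refine (natDegree_C_mul_le _ _).trans ?_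
          compute_degree) [z, z⁻¹, z * a, (z * a)⁻¹] (by
          simp only [List.nodup_cons, List.mem_cons, List.not_mem_nil, not_false_eq_true,
            List.nodup_nil, and_true, or_false, not_or]
          refine ⟨⟨fun h => d1 ?_, fun h => d3 ?_, fun h => d4 ?_⟩,
            ⟨fun h => d4 ?_, fun h => d3 ?_⟩, fun h => d2 ?_⟩
          · field_simp at h; exact h
          · exact (mul_right_eq_self₀.1 h.symm).resolve_right hz0
          · field_simp at h; linear_combination h
          · field_simp at h; linear_combination -h
          · rw [inv_inj] at h
            exact (mul_right_eq_self₀.1 h.symm).resolve_right hz0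
          · field_simp at h; linear_combination h) (by simp) (by
          intro T hT
          simp only [List.mem_cons, List.not_mem_nil, or_false] at hT
          rcases hT with rfl | rfl | rfl | rfl
          · exact g1
          · exact Gen_inv g1
          · exact g2
          · exact Gen_inv g2) (by
          intro T hT
          simp only [List.mem_cons, List.not_mem_nil, or_false] at hT
          rcases hT with rfl | rfl | rfl | rfl
          · exact v1
          · exact inv_case _ g1.1 v1
          · exact v2
          · exact inv_case _ g2.1 v2)
      have fin := interp_at q (gz a z) G H 1 hG hH l R key t ht
      have ht0 := ht.1
      apply mul_left_cancel₀ (pow_ne_zero 1 ht0)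
      rw [fin, hRe, Finset.mul_sum]
      apply Finset.sum_congr rfl
      intro i _
      simp only [List.map_cons, List.prod_cons, List.length_cons, hP]
      field_simp

end
end VWP

section
variable {F : Type*} [Field F]

lemma VWP.cc_eq (q z : F) (n r i : ℕ) (hz : ∀ m : ℕ, z * q ^ m ≠ 1) (hz' : ∀ m : ℕ, z * q ^ m ≠ -1) :
    VWP.cc q n r z i = q ^ ((n * r : ℤ) - (r.choose 2 : ℤ)) * qPoch (-q) q (n - r) *
        (qPoch (q * z ^ 2) (q ^ 2) r / qPoch (q * z ^ 2) q r) *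
        ((qPoch (z ^ 2) q i * qPoch (q * z) q i * qPoch (-(q * z)) q i *
              qPoch (q ^ (-(r : ℤ))) q i) /
            (qPoch z q i * qPoch (-z) q i * qPoch (q ^ (r + 1) * z ^ 2) q i) *
            (-(q ^ ((r : ℤ) - (n : ℤ)))) ^ i / qPoch q q i) := by
  have n1 : qPoch z q i ≠ 0 := VWP.qPoch_ne _ _ _ hz
  have n2 : qPoch (-z) q i ≠ 0 := VWP.qPoch_ne _ _ _ (fun m h => hz' m (by linear_combination -h))
  have n3 : 1 - z ≠ 0 := sub_ne_zero.2 (by have := (hz 0).symm; simpa using this)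
  have n4 : 1 + z ≠ 0 := fun h => hz' 0 (by linear_combination h)
  have h1 := VWP.qPoch_shift z q i
  have h2 := VWP.qPoch_shift (-z) q i
  have e1 : qPoch (q * z) q i = qPoch z q i * (1 - z * q ^ i) / (1 - z) := by
    rw [h1, mul_comm z q, mul_div_cancel_left₀ _ n3]
  have e2 : qPoch (-(q * z)) q i = qPoch (-z) q i * (1 + z * q ^ i) / (1 + z) := by
    rw [show 1 + z * q ^ i = 1 - -z * q ^ i by ring, h2, show -z * q = -(q * z) by ring,
      show 1 - -z = 1 + z by ring, mul_div_cancel_left₀ _ n4]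
  have e3 : (1 - z ^ 2 * q ^ (2 * i)) / (1 - z ^ 2) =
      (1 - z * q ^ i) / (1 - z) * ((1 + z * q ^ i) / (1 + z)) := by
    rw [div_mul_div_comm]; congr 1 <;> ring
  rw [VWP.cc, e1, e2, e3]
  generalize qPoch z q i = A at *
  generalize qPoch (-z) q i = B at *
  generalize (1 - z * q ^ i) = A2
  generalize (1 + z * q ^ i) = A3
  generalize (1 - z) = A4
  generalize (1 + z) = A5
  generalize qPoch (z ^ 2) q i = A6
  generalize qPoch (q ^ (-(r : ℤ))) q i = A7
  generalize qPoch (q ^ (r + 1) * z ^ 2) q i = A8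
  generalize qPoch q q i = A9
  generalize (-(q ^ ((r : ℤ) - (n : ℤ)))) ^ i = A10
  congr 1
  have : A6 * (A * A2 / A4) * (B * A3 / A5) * A7 / (A * B * A8) =
      A6 * (A2 / A4) * (A3 / A5) * A7 / A8 := by
    rw [show A6 * (A * A2 / A4) * (B * A3 / A5) * A7 =
      (A * B) * (A6 * (A2 / A4) * (A3 / A5) * A7) by ring, mul_div_mul_left _ _ (mul_ne_zero n1 n2)]
  rw [this]
  simp only [div_eq_mul_inv, mul_inv]
  ring

end

/-- Theorem 8: a very-well-poised terminating basic hypergeometric summation obtained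
from the principal specialization `u_i = z q^{i-1}` (with `t = q`) of the main
rational identity; the right-hand side is a terminating `_{2n+4}φ_{2n+3}` series. -/
theorem stmt14 {F : Type*} [Field F] {n : ℕ} (r : ℕ) (hr : r ≤ n)
    (x : Fin n → F) (z q : F)
    (hq0 : q ≠ 0) (hz0 : z ≠ 0) (hx0 : ∀ i, x i ≠ 0)
    (hx2 : ∀ i, (x i) ^ 2 ≠ 1)
    (hxx : ∀ i j, i ≠ j → x i * x j ≠ 1 ∧ x i ≠ x j)
    (hq : ∀ m : ℤ, m ≠ 0 → q ^ m ≠ 1)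
    (hz2 : ∀ m : ℤ, z ^ 2 * q ^ m ≠ 1)
    (hz1 : ∀ m : ℤ, z * q ^ m ≠ 1 ∧ z * q ^ m ≠ -1)
    (hzx : ∀ i, ∀ m : ℤ, z * x i * q ^ m ≠ 1 ∧ z * q ^ m ≠ x i) :
    ∑ σ : Fin n → Bool,
      (∏ i, ((1 - q * (sgnVar x σ i) ^ 2) / (1 - (sgnVar x σ i) ^ 2)) *
        ((1 - q ^ r * z * (sgnVar x σ i)⁻¹) / (1 - z * (sgnVar x σ i)⁻¹))) *
      ∏ i, ∏ j ∈ Finset.Ioi i,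
        (1 - q * sgnVar x σ i * sgnVar x σ j) / (1 - sgnVar x σ i * sgnVar x σ j)
    = q ^ ((n * r : ℤ) - (r.choose 2 : ℤ)) * qPoch (-q) q (n - r) *
        (qPoch (q * z ^ 2) (q ^ 2) r / qPoch (q * z ^ 2) q r) *
        ∑ i ∈ Finset.range (r + 1),
          (qPoch (z ^ 2) q i * qPoch (q * z) q i * qPoch (-(q * z)) q i *
              qPoch (q ^ (-(r : ℤ))) q i *
              ∏ l, (qPoch (q * z * x l) q i * qPoch (q * z / x l) q i)) /
            (qPoch z q i * qPoch (-z) q i * qPoch (q ^ (r + 1) * z ^ 2) q i *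
              ∏ l, (qPoch (z * x l) q i * qPoch (z / x l) q i)) *
            (-(q ^ ((r : ℤ) - (n : ℤ)))) ^ i / qPoch q q i := by
  have hzN : ∀ i, ∀ m : ℕ, z * x i * q ^ m ≠ 1 ∧ z / x i * q ^ m ≠ 1 := by
    intro i m
    have h := hzx i m
    rw [zpow_natCast] at h
    refine ⟨h.1, fun h' => h.2 ?_⟩
    have := hx0 i
    field_simp at h'
    exact h'
  have hzi : ∀ i, (1 - z * x i) * (1 - z * (x i)⁻¹) ≠ 0 := by
    intro i
    have h := hzN i 0
    rw [pow_zero, mul_one, mul_one] at h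
    exact mul_ne_zero (sub_ne_zero.2 h.1.symm) (sub_ne_zero.2 (by rw [← div_eq_mul_inv]; exact h.2.symm))
  have hgood : VWP.Good (List.ofFn x) := by
    refine ⟨fun y hy => ?_, ?_⟩
    · obtain ⟨i, rfl⟩ := List.mem_ofFn.1 hy
      exact ⟨hx0 i, hx2 i⟩
    · rw [List.pairwise_ofFn]
      intro i j hij
      exact hxx i j hij.ne
  have hzg : VWP.ZG q z (List.ofFn x) := by
    refine ⟨hz0, hz2, fun y hy => ?_⟩
    obtain ⟨i, rfl⟩ := List.mem_ofFn.1 hy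
    exact hzx i
  have main := VWP.main_list q hq0 hq (List.ofFn x) hgood r (by simpa using hr) z hzg
  rw [List.length_ofFn] at main
  simp only [List.map_ofFn, List.prod_ofFn, Function.comp] at main
  have hPne : (∏ l, (1 - z * x l) * (1 - z * (x l)⁻¹)) ≠ 0 :=
    Finset.prod_ne_zero_iff.2 (fun l _ => hzi l)
  apply mul_left_cancel₀ hPne
  -- left-hand side
  have hL : (∏ l, (1 - z * x l) * (1 - z * (x l)⁻¹)) * ∑ σ : Fin n → Bool,
      (∏ i, ((1 - q * (sgnVar x σ i) ^ 2) / (1 - (sgnVar x σ i) ^ 2)) *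
        ((1 - q ^ r * z * (sgnVar x σ i)⁻¹) / (1 - z * (sgnVar x σ i)⁻¹))) *
      ∏ i, ∏ j ∈ Finset.Ioi i,
        (1 - q * sgnVar x σ i * sgnVar x σ j) / (1 - sgnVar x σ i * sgnVar x σ j) =
      VWP.PS (List.ofFn x) (VWP.W q (VWP.gz (q ^ r) z)) := by
    rw [VWP.PS_ofFn, Finset.mul_sum]
    apply Finset.sum_congr rfl
    intro σ _
    rw [VWP.W_ofFn, ← mul_assoc, ← Finset.prod_mul_distrib]
    congr 1
    · apply Finset.prod_congr rfl
      intro i _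
      have e1 : (1 - z * x i) * (1 - z * (x i)⁻¹) =
          (1 - z * sgnVar x σ i) * (1 - z * (sgnVar x σ i)⁻¹) := by
        rw [sgnVar]; split_ifs
        · rfl
        · rw [inv_inv]; ring
      have e2 : 1 - z * (sgnVar x σ i)⁻¹ ≠ 0 := by
        have := hzi i
        rw [e1] at this
        exact right_ne_zero_of_mul this
      rw [e1, VWP.wt, VWP.gz]
      generalize 1 - z * (sgnVar x σ i)⁻¹ = U at *
      generalize (1 - q * (sgnVar x σ i) ^ 2) / (1 - (sgnVar x σ i) ^ 2) = V at *
      field_simp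
    · apply Finset.prod_congr rfl
      intro i _
      apply Finset.prod_congr rfl
      intro j _
      rw [VWP.phi, mul_assoc]
  rw [hL, main, Finset.mul_sum, Finset.mul_sum]
  apply Finset.sum_congr rfl
  intro i _
  rw [VWP.cc_eq q z n r i (fun m => by have := (hz1 m).1; rwa [zpow_natCast] at this)
    (fun m => by have := (hz1 m).2; rwa [zpow_natCast] at this)]
  have hprod : (∏ l, (1 - z * x l) * (1 - z * (x l)⁻¹)) *
      ((∏ l, (qPoch (q * z * x l) q i * qPoch (q * z / x l) q i)) /
        ∏ l, (qPoch (z * x l) q i * qPoch (z / x l) q i)) =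
      ∏ l, (1 - z * q ^ i * x l) * (1 - z * q ^ i * (x l)⁻¹) := by
    rw [← Finset.prod_div_distrib, ← Finset.prod_mul_distrib]
    apply Finset.prod_congr rfl
    intro l _
    have n1 : qPoch (z * x l) q i ≠ 0 := VWP.qPoch_ne _ _ _ (fun m => (hzN l m).1)
    have n2 : qPoch (z / x l) q i ≠ 0 := VWP.qPoch_ne _ _ _ (fun m => (hzN l m).2)
    have h1 := VWP.qPoch_shift (z * x l) q i
    have h2 := VWP.qPoch_shift (z / x l) q i
    rw [show z * x l * q = q * z * x l by ring] at h1
    rw [show z / x l * q = q * z / x l by ring] at h2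
    rw [← mul_div_assoc, div_eq_iff (mul_ne_zero n1 n2)]
    rw [show z * (x l)⁻¹ = z / x l by ring, show z * q ^ i * x l = z * x l * q ^ i by ring,
      show z * q ^ i * (x l)⁻¹ = z / x l * q ^ i by ring]
    linear_combination (-((1 - z / x l) * qPoch (q * z / x l) q i)) * h1 -
      (qPoch (z * x l) q i * (1 - z * x l * q ^ i)) * h2
  rw [← hprod]
  simp only [div_eq_mul_inv, mul_inv]
  ring
end
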